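/- arXiv:2512.13386 — 2 statements merged into one kernel-verified Lean document; each statement's English description precedes it below -/
import Mathlib

section
/- Let k be a field and let b = (b_1 ≤ … ≤ b_m), e = (e_1 ≤ … ≤ e_{m+n}), a = (a_1 ≤ … ≤ a_n) be splitting types with deg a + deg b = deg e. Then the triple (b,e,a) admits a matrix realization over k[x,y] if and only if (b,e,a) satisfies the realizability criterion. -/
open Finset

/-- Degree of a 1-based integer tuple of rank `n`. -/
def degT (a : ℕ → ℤ) (n : ℕ) : ℤ := ∑ i ∈ Icc 1 n, a i

/-- `a` is weakly increasing on indices `1, …, n` (a splitting type of rank `n`). -/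
def Incr (a : ℕ → ℤ) (n : ℕ) : Prop := ∀ i j : ℕ, 1 ≤ i → i ≤ j → j ≤ n → a i ≤ a j

/-- `S(μ,ν) = Σ_{i=ν}^n a_i + Σ_{i=μ}^m b_i − Σ_{i=μ+ν−1}^{m+n} e_i`. -/
def Sfun (b e a : ℕ → ℤ) (m n μ ν : ℕ) : ℤ :=
  (∑ i ∈ Icc ν n, a i) + (∑ i ∈ Icc μ m, b i) - ∑ i ∈ Icc (μ + ν - 1) (m + n), e i

/-- `A(μ,ν) = a_ν − e_{μ+ν}`. -/
def Afun (e a : ℕ → ℤ) (μ ν : ℕ) : ℤ := a ν - e (μ + ν)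

/-- `B(μ,ν) = e_{μ+ν−1} − b_μ`. -/
def Bfun (b e : ℕ → ℤ) (μ ν : ℕ) : ℤ := e (μ + ν - 1) - b μ

/-- `h_μ = min{ν : 1 ≤ ν ≤ n+1, S(μ,ν') < 0 for all ν' with ν < ν' ≤ n+1}`. -/
noncomputable def hfun (b e a : ℕ → ℤ) (m n μ : ℕ) : ℕ :=
  sInf {ν : ℕ | 1 ≤ ν ∧ ν ≤ n + 1 ∧ ∀ ν', ν < ν' → ν' ≤ n + 1 → Sfun b e a m n μ ν' < 0}

/-- Weak eligibility of a triple `(b,e,a)` of ranks `m, m+n, n`. -/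
def WeaklyEligible (b e a : ℕ → ℤ) (m n : ℕ) : Prop :=
  degT a n + degT b m = degT e (m + n) ∧
  (∀ i, 1 ≤ i → i ≤ n → e i ≤ a i) ∧
  (∀ i, 1 ≤ i → i ≤ m → b i ≤ e (n + i))

/-- The realizability criterion: weakly eligible, and `A(μ,ν) ≥ 0`, `B(μ,ν) ≥ 0`
whenever `1 ≤ μ ≤ m`, `1 ≤ ν ≤ n` and `ν ≥ h_μ`. -/
def RealizCrit (b e a : ℕ → ℤ) (m n : ℕ) : Prop :=
  WeaklyEligible b e a m n ∧
  ∀ μ ν, 1 ≤ μ → μ ≤ m → 1 ≤ ν → ν ≤ n → hfun b e a m n μ ≤ ν →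
    0 ≤ Afun e a μ ν ∧ 0 ≤ Bfun b e μ ν

/-- `f ≥ g` in the balancedness partial order (for tuples of rank `n`):
all prefix sums of `f` dominate those of `g`. -/
def MoreBal (f g : ℕ → ℤ) (n : ℕ) : Prop :=
  ∀ k, k ≤ n → (∑ i ∈ Icc 1 k, g i) ≤ ∑ i ∈ Icc 1 k, f i

/-- `f > g` in the balancedness partial order: `f ≥ g` and `f ≠ g` (on indices `1..n`). -/
def StrictMoreBal (f g : ℕ → ℤ) (n : ℕ) : Prop :=
  MoreBal f g n ∧ ∃ i, 1 ≤ i ∧ i ≤ n ∧ f i ≠ g i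

/-- `hom(u,v) = Σ_i Σ_j max(0, v_j − u_i + 1)`, the dimension of
`Hom(O(u), O(v))` on `P¹`. -/
def homT (u : ℕ → ℤ) (p : ℕ) (v : ℕ → ℤ) (q : ℕ) : ℤ :=
  ∑ i ∈ Icc 1 p, ∑ j ∈ Icc 1 q, max 0 (v j - u i + 1)

noncomputable section

/-- A matrix realization of `(b,e,a)` over `k[x,y]`: a quotient matrix `φ` and a
kernel matrix `ψ` with homogeneous entries of the prescribed degrees, with
`φψ = 0`, such that the maximal minors of each matrix generate an ideal
containing a power of `(x,y)`. -/
def MatReal (k : Type) [Field k] (b e a : ℕ → ℤ) (m n : ℕ) : Prop :=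
  ∃ (φ : Matrix (Fin n) (Fin (m + n)) (MvPolynomial (Fin 2) k))
    (ψ : Matrix (Fin (m + n)) (Fin m) (MvPolynomial (Fin 2) k)),
    (∀ (i : Fin n) (j : Fin (m + n)),
      (0 ≤ a (i.1 + 1) - e (j.1 + 1) →
        (φ i j).IsHomogeneous (a (i.1 + 1) - e (j.1 + 1)).toNat) ∧
      (a (i.1 + 1) - e (j.1 + 1) < 0 → φ i j = 0)) ∧
    (∀ (i : Fin (m + n)) (j : Fin m),
      (0 ≤ e (i.1 + 1) - b (j.1 + 1) →
        (ψ i j).IsHomogeneous (e (i.1 + 1) - b (j.1 + 1)).toNat) ∧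
      (e (i.1 + 1) - b (j.1 + 1) < 0 → ψ i j = 0)) ∧
    φ * ψ = 0 ∧
    (∃ N : ℕ,
      (Ideal.span {MvPolynomial.X 0, MvPolynomial.X 1} :
          Ideal (MvPolynomial (Fin 2) k)) ^ N ≤
        Ideal.span {p | ∃ g : Fin n → Fin (m + n), Function.Injective g ∧
          p = (φ.submatrix id g).det}) ∧
    (∃ N : ℕ,
      (Ideal.span {MvPolynomial.X 0, MvPolynomial.X 1} :
          Ideal (MvPolynomial (Fin 2) k)) ^ N ≤
        Ideal.span {p | ∃ g : Fin m → Fin (m + n), Function.Injective g ∧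
          p = (ψ.submatrix g id).det})


section RealAlg
open MvPolynomial

variable {k : Type} [Field k]

/-- Homogeneous of integer degree `d` (zero if `d < 0`). -/
def Hm (p : MvPolynomial (Fin 2) k) (d : ℤ) : Prop :=
  (0 ≤ d → p.IsHomogeneous d.toNat) ∧ (d < 0 → p = 0)

lemma Hm.zero (d : ℤ) : Hm (0 : MvPolynomial (Fin 2) k) d :=
  ⟨fun _ => isHomogeneous_zero _ _ _, fun _ => rfl⟩

lemma Hm.add {p q : MvPolynomial (Fin 2) k} {d : ℤ} (hp : Hm p d) (hq : Hm q d) : Hm (p + q) d :=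
  ⟨fun h => (hp.1 h).add (hq.1 h), fun h => by rw [hp.2 h, hq.2 h, add_zero]⟩

lemma Hm.neg {p : MvPolynomial (Fin 2) k} {d : ℤ} (hp : Hm p d) : Hm (-p) d :=
  ⟨fun h => (hp.1 h).neg, fun h => by rw [hp.2 h, neg_zero]⟩

lemma Hm.sub {p q : MvPolynomial (Fin 2) k} {d : ℤ} (hp : Hm p d) (hq : Hm q d) : Hm (p - q) d := by
  rw [sub_eq_add_neg]; exact hp.add hq.neg

lemma Hm.sum {ι : Type*} (s : Finset ι) (p : ι → MvPolynomial (Fin 2) k) {d : ℤ}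
    (hp : ∀ i ∈ s, Hm (p i) d) : Hm (∑ i ∈ s, p i) d :=
  ⟨fun h => IsHomogeneous.sum _ _ _ fun i hi => (hp i hi).1 h,
   fun h => Finset.sum_eq_zero fun i hi => (hp i hi).2 h⟩

lemma Hm.mul' {p q : MvPolynomial (Fin 2) k} {d d' D : ℤ} (hp : Hm p d) (hq : Hm q d')
    (hD : D = d + d') : Hm (p * q) D := by
  subst hD
  rcases lt_or_ge d 0 with h | h
  · rw [hp.2 h, zero_mul]; exact Hm.zero _
  rcases lt_or_ge d' 0 with h' | h'
  · rw [hq.2 h', mul_zero]; exact Hm.zero _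
  refine ⟨fun _ => ?_, fun h'' => by omega⟩
  rw [Int.toNat_add h h']
  exact (hp.1 h).mul (hq.1 h')

lemma Hm.of {p : MvPolynomial (Fin 2) k} {d : ℕ} (hp : p.IsHomogeneous d) {D : ℤ} (hD : D = d) :
    Hm p D := by
  subst hD
  exact ⟨fun _ => by simpa using hp, fun h => by omega⟩

lemma Hm.Xpow (i : Fin 2) (d : ℕ) {D : ℤ} (hD : D = d) :
    Hm ((X i : MvPolynomial (Fin 2) k) ^ d) D :=
  Hm.of (isHomogeneous_X_pow i d) hD

/-- integer-indexed homogeneous component -/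
def hcmp (d : ℤ) (p : MvPolynomial (Fin 2) k) : MvPolynomial (Fin 2) k :=
  if 0 ≤ d then homogeneousComponent d.toNat p else 0

lemma hcmp_hm (d : ℤ) (p : MvPolynomial (Fin 2) k) : Hm (hcmp d p) d := by
  unfold hcmp
  refine ⟨fun h => ?_, fun h => ?_⟩
  · rw [if_pos h]; exact homogeneousComponent_isHomogeneous _ _
  · rw [if_neg (by omega)]

lemma hcmp_self {d : ℤ} {p : MvPolynomial (Fin 2) k} (hp : Hm p d) : hcmp d p = p := by
  unfold hcmp
  split_ifs with h
  · exact homogeneousComponent_eq_self (hp.1 h)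
  · exact (hp.2 (by omega)).symm

lemma hcmp_sum {ι : Type*} (s : Finset ι) (d : ℤ) (p : ι → MvPolynomial (Fin 2) k) :
    hcmp d (∑ i ∈ s, p i) = ∑ i ∈ s, hcmp d (p i) := by
  unfold hcmp
  split_ifs with h
  · exact map_sum _ _ _
  · simp

lemma hcmp_mul {d d' D : ℤ} {p : MvPolynomial (Fin 2) k} (hp : Hm p d)
    (q : MvPolynomial (Fin 2) k) (hD : D = d + d') : hcmp D (p * q) = p * hcmp d' q := by
  rcases lt_or_ge d 0 with h | h
  · rw [hp.2 h]; unfold hcmp; simp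
  have hd := hp.1 h
  letI : GradedAlgebra (homogeneousSubmodule (Fin 2) k) := MvPolynomial.gradedAlgebra
  have key : ∀ j : ℕ, homogeneousComponent j (p * q) =
      if d.toNat ≤ j then p * homogeneousComponent (j - d.toNat) q else 0 := by
    intro j
    have := DirectSum.coe_decompose_mul_of_left_mem (homogeneousSubmodule (Fin 2) k) (i := d.toNat)
      (a := p) (b := q) j hd
    have dec : ∀ (f : MvPolynomial (Fin 2) k) (i : ℕ),
        ((DirectSum.decompose (homogeneousSubmodule (Fin 2) k) f i :
          homogeneousSubmodule (Fin 2) k i) : MvPolynomial (Fin 2) k) = homogeneousComponent i f :=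
      fun f i => decomposition.decompose'_apply f i
    rw [dec, dec] at this
    exact this
  unfold hcmp
  split_ifs with h1 h2 h2
  · rw [key, if_pos (by omega)]
    congr 3
    omega
  · rw [key, if_neg (by omega), mul_zero]
  · omega
  · simp

/-! ### minors and one-sided inverses -/

lemma exists_rinv {R : Type*} [CommRing R] {n N : ℕ} (φ : Matrix (Fin n) (Fin N) R) (p : R)
    (hp : p ∈ Ideal.span {p | ∃ g : Fin n → Fin N, Function.Injective g ∧
          p = (φ.submatrix id g).det}) : ∃ σ : Matrix (Fin N) (Fin n) R, φ * σ = p • 1 := by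
  induction hp using Submodule.span_induction with
  | mem x hx =>
    obtain ⟨g, -, rfl⟩ := hx
    refine ⟨(1 : Matrix (Fin N) (Fin N) R).submatrix id g * (φ.submatrix id g).adjugate, ?_⟩
    rw [← Matrix.mul_assoc]
    have : φ * (1 : Matrix (Fin N) (Fin N) R).submatrix id g = φ.submatrix id g := by
      ext i j
      simp [Matrix.mul_apply, Matrix.one_apply]
    rw [this, Matrix.mul_adjugate]
  | zero => exact ⟨0, by simp⟩
  | add x y _ _ hx hy =>
    obtain ⟨s, hs⟩ := hx
    obtain ⟨t, ht⟩ := hy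
    exact ⟨s + t, by rw [Matrix.mul_add, hs, ht, add_smul]⟩
  | smul c x _ hx =>
    obtain ⟨s, hs⟩ := hx
    exact ⟨c • s, by rw [Matrix.mul_smul, hs, smul_smul, smul_eq_mul]⟩

lemma mem_minors {R : Type*} [CommRing R] {n N : ℕ} (φ : Matrix (Fin n) (Fin N) R) (p : R)
    (σ : Matrix (Fin N) (Fin n) R) (h : φ * σ = p • 1) :
    p ^ n ∈ Ideal.span {p | ∃ g : Fin n → Fin N, Function.Injective g ∧
          p = (φ.submatrix id g).det} := by
  have h1 : (φ * σ).det = p ^ n := by rw [h]; simp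
  have h2 : (φ * σ).det = Matrix.detRowAlternating (fun i => ∑ j, σ j i • φ.transpose j) := by
    rw [← Matrix.det_transpose]
    change Matrix.detRowAlternating _ = _
    congr 1
    ext i l
    simp [Matrix.mul_apply, mul_comm]
  rw [← h1, h2]
  change (Matrix.detRowAlternating (R := R) (n := Fin n)).toMultilinearMap _ ∈ _
  rw [MultilinearMap.map_sum]
  refine Ideal.sum_mem _ fun g _ => ?_
  rw [MultilinearMap.map_smul_univ, smul_eq_mul]
  by_cases hg : Function.Injective g
  · refine Ideal.mul_mem_left _ _ (Ideal.subset_span ⟨g, hg, ?_⟩)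
    rw [← Matrix.det_transpose]
    rfl
  · rw [Function.Injective] at hg
    push Not at hg
    obtain ⟨i, j, hij, hne⟩ := hg
    have : (Matrix.detRowAlternating (R := R) (n := Fin n)).toMultilinearMap
        (fun i => φ.transpose (g i)) = 0 :=
      AlternatingMap.map_eq_zero_of_eq Matrix.detRowAlternating _ (by rw [hij]) hne
    rw [this, mul_zero]
    exact Ideal.zero_mem _

/-- A realization with local one-sided inverses. -/
def GReal (k : Type) [Field k] (b e a : ℕ → ℤ) (m n : ℕ) : Prop :=
  ∃ (φ : Matrix (Fin n) (Fin (m + n)) (MvPolynomial (Fin 2) k))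
    (ψ : Matrix (Fin (m + n)) (Fin m) (MvPolynomial (Fin 2) k)),
    (∀ i j, Hm (φ i j) (a (i.1 + 1) - e (j.1 + 1))) ∧
    (∀ i j, Hm (ψ i j) (e (i.1 + 1) - b (j.1 + 1))) ∧
    φ * ψ = 0 ∧
    ∀ t : Fin 2, ∃ (N : ℕ) (σ : Matrix (Fin (m + n)) (Fin n) (MvPolynomial (Fin 2) k))
      (ρ : Matrix (Fin m) (Fin (m + n)) (MvPolynomial (Fin 2) k)),
      φ * σ = (X t : MvPolynomial (Fin 2) k) ^ N • 1 ∧ ρ * ψ = (X t : MvPolynomial (Fin 2) k) ^ N • 1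

lemma pow_le_of_X_mem (I : Ideal (MvPolynomial (Fin 2) k))
    (h : ∀ t : Fin 2, ∃ N, (X t : MvPolynomial (Fin 2) k) ^ N ∈ I) :
    ∃ N : ℕ, (Ideal.span {X 0, X 1} : Ideal (MvPolynomial (Fin 2) k)) ^ N ≤ I := by
  refine Ideal.exists_pow_le_of_le_radical_of_fg ?_ ?_
  · rw [Ideal.span_le]
    rintro x (rfl | rfl)
    · exact h 0
    · exact h 1
  · exact Submodule.fg_span (Set.toFinite _)

lemma minors_transpose {R : Type*} [CommRing R] {m N : ℕ} (ψ : Matrix (Fin N) (Fin m) R) :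
    {p | ∃ g : Fin m → Fin N, Function.Injective g ∧ p = (ψ.submatrix g id).det} =
    {p | ∃ g : Fin m → Fin N, Function.Injective g ∧ p = (ψ.transpose.submatrix id g).det} := by
  ext p
  simp only [Set.mem_ofPred_eq]
  refine exists_congr fun g => and_congr_right fun _ => ?_
  rw [← Matrix.det_transpose (ψ.submatrix g id)]
  rfl

lemma greal_iff (b e a : ℕ → ℤ) (m n : ℕ) : MatReal k b e a m n ↔ GReal k b e a m n := by
  constructor
  · rintro ⟨φ, ψ, h1, h2, h3, ⟨N1, h4⟩, ⟨N2, h5⟩⟩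
    refine ⟨φ, ψ, h1, h2, h3, fun t => ?_⟩
    have hX : (X t : MvPolynomial (Fin 2) k) ∈
        (Ideal.span {X 0, X 1} : Ideal (MvPolynomial (Fin 2) k)) := by
      apply Ideal.subset_span
      fin_cases t <;> simp
    have e1 := h4 (Ideal.pow_mem_pow hX N1)
    have e2 := h5 (Ideal.pow_mem_pow hX N2)
    rw [minors_transpose] at e2
    obtain ⟨σ, hσ⟩ := exists_rinv φ _ e1
    obtain ⟨ρ, hρ⟩ := exists_rinv ψ.transpose _ e2
    refine ⟨N1 + N2, (X t : MvPolynomial (Fin 2) k) ^ N2 • σ,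
      (X t : MvPolynomial (Fin 2) k) ^ N1 • ρ.transpose, ?_, ?_⟩
    · rw [Matrix.mul_smul, hσ, smul_smul, ← pow_add, add_comm]
    · have := congrArg Matrix.transpose hρ
      rw [Matrix.transpose_mul, Matrix.transpose_transpose] at this
      rw [Matrix.smul_mul, this]
      simp [smul_smul, pow_add]
  · rintro ⟨φ, ψ, h1, h2, h3, h4⟩
    refine ⟨φ, ψ, h1, h2, h3, pow_le_of_X_mem _ fun t => ?_, ?_⟩
    · obtain ⟨N, σ, ρ, hσ, hρ⟩ := h4 t
      have := mem_minors φ _ σ hσ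
      rw [← pow_mul] at this
      exact ⟨_, this⟩
    · rw [minors_transpose]
      refine pow_le_of_X_mem _ fun t => ?_
      obtain ⟨N, σ, ρ, hσ, hρ⟩ := h4 t
      have e1 := congrArg Matrix.transpose hρ
      rw [Matrix.transpose_mul] at e1
      have := mem_minors ψ.transpose ((X t : MvPolynomial (Fin 2) k) ^ N) ρ.transpose (by rw [e1]; simp)
      rw [← pow_mul] at this
      exact ⟨_, this⟩

end RealAlg


section Comb

lemma degT_zero (e : ℕ → ℤ) : degT e 0 = 0 := by simp [degT]

lemma degT_succ (e : ℕ → ℤ) (j : ℕ) : degT e (j + 1) = degT e j + e (j + 1) := by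
  unfold degT
  rw [Finset.sum_Icc_succ_top (by omega)]

lemma degT_split (e : ℕ → ℤ) (j N : ℕ) (h : j ≤ N) :
    degT e N = degT e j + ∑ i ∈ Icc (j + 1) N, e i := by
  induction N, h using Nat.le_induction with
  | base => simp
  | succ N h ih => rw [degT_succ, ih, Finset.sum_Icc_succ_top (by omega)]; ring

/-- prefix form of `S` (shifted indices) -/
def Tf (b e a : ℕ → ℤ) (μ ν : ℕ) : ℤ := degT e (μ + ν) - degT a ν - degT b μ

lemma Sfun_eq (b e a : ℕ → ℤ) (m n μ ν : ℕ) (hμ : μ ≤ m) (hν : ν ≤ n)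
    (hdeg : degT a n + degT b m = degT e (m + n)) :
    Sfun b e a m n (μ + 1) (ν + 1) = Tf b e a μ ν := by
  unfold Sfun Tf
  have h1 := degT_split a ν n hν
  have h2 := degT_split b μ m hμ
  have h3 := degT_split e (μ + ν) (m + n) (by omega)
  have : μ + 1 + (ν + 1) - 1 = μ + ν + 1 := by omega
  rw [this]
  linarith

/-- convenient reformulation of the criterion -/
def Crit2 (b e a : ℕ → ℤ) (m n : ℕ) : Prop :=
  degT a n + degT b m = degT e (m + n) ∧
  (∀ i, 1 ≤ i → i ≤ n → e i ≤ a i) ∧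
  (∀ i, 1 ≤ i → i ≤ m → b i ≤ e (n + i)) ∧
  ∀ μ ν, μ < m → 1 ≤ ν → ν ≤ n → (a ν < e (μ + 1 + ν) ∨ e (μ + ν) < b (μ + 1)) →
    ∃ ν', ν ≤ ν' ∧ ν' ≤ n ∧ 0 ≤ Tf b e a μ ν'

lemma crit_iff (b e a : ℕ → ℤ) (m n : ℕ) : RealizCrit b e a m n ↔ Crit2 b e a m n := by
  constructor
  · rintro ⟨⟨h1, h2, h3⟩, h4⟩
    refine ⟨h1, h2, h3, fun μ ν hμ hν hνn hbad => ?_⟩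
    by_contra hcon
    push Not at hcon
    have hle : hfun b e a m n (μ + 1) ≤ ν := by
      apply Nat.sInf_le
      refine ⟨hν, by omega, fun ν' hlt hle => ?_⟩
      obtain ⟨w, rfl⟩ : ∃ w, ν' = w + 1 := ⟨ν' - 1, by omega⟩
      rw [Sfun_eq b e a m n μ w (by omega) (by omega) h1]
      exact hcon w (by omega) (by omega)
    have := h4 (μ + 1) ν (by omega) (by omega) hν hνn hle
    unfold Afun Bfun at this
    have e1 : μ + 1 + ν - 1 = μ + ν := by omega
    rw [e1] at this
    rcases hbad with h | h <;> omega
  · rintro ⟨h1, h2, h3, h4⟩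
    refine ⟨⟨h1, h2, h3⟩, fun μ ν hμ hμm hν hνn hle => ?_⟩
    obtain ⟨μ, rfl⟩ : ∃ w, μ = w + 1 := ⟨μ - 1, by omega⟩
    have hmem := Nat.sInf_mem (s := {ν : ℕ | 1 ≤ ν ∧ ν ≤ n + 1 ∧
      ∀ ν', ν < ν' → ν' ≤ n + 1 → Sfun b e a m n (μ + 1) ν' < 0})
      ⟨n + 1, by omega, le_rfl, fun _ _ _ => by omega⟩
    obtain ⟨-, -, h5⟩ := hmem
    by_contra hcon
    have hbad : a ν < e (μ + 1 + ν) ∨ e (μ + ν) < b (μ + 1) := by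
      unfold Afun Bfun at hcon
      have e1 : μ + 1 + ν - 1 = μ + ν := by omega
      rw [e1] at hcon
      by_contra hc
      push Not at hc
      exact hcon ⟨by omega, by omega⟩
    obtain ⟨ν', h6, h7, h8⟩ := h4 μ ν (by omega) hν hνn hbad
    have := h5 (ν' + 1) (by unfold hfun at hle; omega) (by omega)
    rw [Sfun_eq b e a m n μ ν' (by omega) (by omega) h1] at this
    omega

lemma degT_congr (f g : ℕ → ℤ) (s : ℕ) (h : ∀ j, 1 ≤ j → j ≤ s → f j = g j) :
    degT f s = degT g s := by
  unfold degT
  exact Finset.sum_congr rfl fun i hi => h i (Finset.mem_Icc.1 hi).1 (Finset.mem_Icc.1 hi).2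

lemma degT_le (f g : ℕ → ℤ) (s : ℕ) (h : ∀ j, 1 ≤ j → j ≤ s → f j ≤ g j) :
    degT f s ≤ degT g s := by
  unfold degT
  exact Finset.sum_le_sum fun i hi => h i (Finset.mem_Icc.1 hi).1 (Finset.mem_Icc.1 hi).2

/-- discrete interpolation between two sorted tuples -/
lemma interp (L e : ℕ → ℤ) (s : ℕ) (hL : Incr L s) (he : Incr e s)
    (hle : ∀ j, 1 ≤ j → j ≤ s → L j ≤ e j) (d : ℕ) (hd : (d : ℤ) ≤ degT e s - degT L s) :
    ∃ g, Incr g s ∧ (∀ j, 1 ≤ j → j ≤ s → L j ≤ g j) ∧ (∀ j, 1 ≤ j → j ≤ s → g j ≤ e j) ∧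
      degT g s = degT e s - d := by
  induction d with
  | zero => exact ⟨e, he, hle, fun _ _ _ => le_rfl, by simp⟩
  | succ d ih =>
    obtain ⟨g, g1, g2, g3, g4⟩ := ih (by push_cast at hd; omega)
    have hex : ∃ j, 1 ≤ j ∧ j ≤ s ∧ L j < g j := by
      by_contra hcon
      push Not at hcon
      have := degT_le g L s hcon
      push_cast at hd
      omega
    classical
    obtain ⟨h1, h2, h3⟩ := Nat.find_spec hex
    have hmin := fun j (hj : j < Nat.find hex) => Nat.find_min hex hj
    set t := Nat.find hex
    refine ⟨Function.update g t (g t - 1), ?_, ?_, ?_, ?_⟩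
    · intro i j hi hij hj
      have hg := g1 i j hi hij hj
      by_cases hjt : j = t
      · by_cases hit : i = t
        · subst hit; subst hjt; rfl
        · rw [Function.update_of_ne hit, hjt, Function.update_self]
          have h4 : ¬ (L i < g i) := fun h => hmin i (by omega) ⟨hi, by omega, h⟩
          have h5 := hL i t hi (by omega) h2
          omega
      · rw [Function.update_of_ne hjt]
        by_cases hit : i = t
        · rw [hit, Function.update_self]; rw [hit] at hg; omega
        · rwa [Function.update_of_ne hit]
    · intro j hj hjs
      by_cases hjt : j = t
      · rw [hjt, Function.update_self]; omega
      · rw [Function.update_of_ne hjt]; exact g2 j hj hjs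
    · intro j hj hjs
      have := g3 j hj hjs
      by_cases hjt : j = t
      · rw [hjt, Function.update_self]; rw [hjt] at this; omega
      · rwa [Function.update_of_ne hjt]
    · have : degT (Function.update g t (g t - 1)) s = degT g s - 1 := by
        unfold degT
        have ht : t ∈ Icc 1 s := Finset.mem_Icc.2 ⟨h1, h2⟩
        rw [Finset.sum_update_of_mem ht, ← Finset.add_sum_erase _ _ ht,
          Finset.sdiff_singleton_eq_erase]
        ring
      rw [this, g4]; push_cast; ring

/-- the antidiagonal `r` meets the nonnegative locus -/
lemma good_point (b e a : ℕ → ℤ) (m n r : ℕ) (hc : Crit2 b e a m n) :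
    ∀ μ, μ < r → μ ≤ m → (∃ ν', r ≤ μ + ν' ∧ ν' ≤ n ∧ 0 ≤ Tf b e a μ ν') →
      ∃ μ ν, μ + ν = r ∧ 1 ≤ ν ∧ μ ≤ m ∧ ν ≤ n ∧ 0 ≤ Tf b e a μ ν := by
  obtain ⟨h1, h2, h3, h4⟩ := hc
  intro μ
  induction μ with
  | zero =>
    rintro hr hm ⟨ν', h5, h6, h7⟩
    have mono : ∀ i, 0 ≤ Tf b e a 0 (r + i) → r + i ≤ n → 0 ≤ Tf b e a 0 r := by
      intro i
      induction i with
      | zero => intro h _; simpa using h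
      | succ i ih =>
        intro h hle
        apply ih _ (by omega)
        have := h2 (r + i + 1) (by omega) (by omega)
        have e1 : Tf b e a 0 (r + (i + 1)) = Tf b e a 0 (r + i) + e (r + i + 1) - a (r + i + 1) := by
          unfold Tf
          rw [zero_add, zero_add, ← add_assoc, degT_succ, degT_succ]; ring
        omega
    obtain ⟨i, rfl⟩ := Nat.exists_eq_add_of_le (show r ≤ ν' by omega)
    exact ⟨0, r, by omega, by omega, by omega, by omega, mono i h7 h6⟩
  | succ μ ih =>
    rintro hr hm ⟨ν', h5, h6, h7⟩
    by_cases hex : ∃ i, r ≤ μ + i ∧ i ≤ n ∧ 0 ≤ Tf b e a μ i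
    · exact ih (by omega) (by omega) hex
    push Not at hex
    have hA : ∀ i, r ≤ μ + i → i ≤ n → e (μ + 1 + i) ≤ a i := by
      intro i hi hin
      by_contra hcon
      obtain ⟨w, w1, w2, w3⟩ := h4 μ i (by omega) (by omega) hin (Or.inl (by omega))
      have := hex w (by omega) w2
      omega
    obtain ⟨v, hv⟩ := Nat.exists_eq_add_of_le (show μ + 1 ≤ r by omega)
    have mono : ∀ i, 0 ≤ Tf b e a (μ + 1) (v + i) → v + i ≤ n → 0 ≤ Tf b e a (μ + 1) v := by
      intro i
      induction i with
      | zero => intro h _; simpa using h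
      | succ i ih =>
        intro h hle
        apply ih _ (by omega)
        have := hA (v + i + 1) (by omega) (by omega)
        have e1 : Tf b e a (μ + 1) (v + (i + 1)) =
            Tf b e a (μ + 1) (v + i) + e (μ + 1 + (v + i + 1)) - a (v + i + 1) := by
          unfold Tf
          have x1 := degT_succ a (v + i)
          have x2 := degT_succ e (μ + 1 + (v + i))
          change degT e (μ + 1 + (v + i) + 1) - degT a (v + i + 1) - _ = _
          rw [x1, x2, ← add_assoc (μ + 1) (v + i) 1]; ring
        omega
    obtain ⟨i, rfl⟩ := Nat.exists_eq_add_of_le (show v ≤ ν' by omega)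
    exact ⟨μ + 1, v, by omega, by omega, by omega, by omega, mono i h7 h6⟩

lemma exists_f (b e a : ℕ → ℤ) (m n : ℕ) (hb : Incr b m) (he : Incr e (m + (n + 1)))
    (ha : Incr a (n + 1)) (hc : Crit2 b e a m (n + 1)) :
    ∃ (f : ℕ → ℤ) (s : ℕ), s ≤ m + n ∧ Incr f (m + n) ∧
      (∀ j, 1 ≤ j → j ≤ s → f j ≤ e j) ∧ (∀ j, s < j → j ≤ m + n → f j = e (j + 1)) ∧
      a 1 = e (s + 1) + (degT e s - degT f s) ∧
      Crit2 b f (fun i => a (i + 1)) m n := by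
  classical
  have hc' := hc
  obtain ⟨h1, h2, h3, h4⟩ := hc
  let Adm : ℕ → ℕ → Prop := fun μ j => μ < j ∧ ∀ ν', j < μ + ν' → ν' ≤ n + 1 → Tf b e a μ ν' < 0
  let K : ℤ := min (b 1) (e 1)
  let L : ℕ → ℤ := fun j => Finset.fold max K (fun μ => b (μ + 1)) ((range m).filter fun μ => Adm μ j)
  have L_le : ∀ j c, L j ≤ c ↔ K ≤ c ∧ ∀ μ, μ < m → Adm μ j → b (μ + 1) ≤ c := by
    intro j c
    simp only [L, Finset.fold_max_le, Finset.mem_filter, Finset.mem_range, and_imp]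
  have le_L : ∀ j μ, μ < m → Adm μ j → b (μ + 1) ≤ L j :=
    fun j μ hμ hA => ((L_le j (L j)).1 le_rfl).2 μ hμ hA
  have K_le : ∀ j, K ≤ L j := fun j => ((L_le j (L j)).1 le_rfl).1
  have L_mono : ∀ i j, i ≤ j → L i ≤ L j := by
    intro i j hij
    rw [L_le]
    refine ⟨K_le j, fun μ hμ hA => le_L j μ hμ ⟨by have := hA.1; omega, fun ν' h h' => ?_⟩⟩
    exact hA.2 ν' (by omega) h'
  have L_b : ∀ j, 1 ≤ j → j ≤ m → L j ≤ b j := by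
    intro j hj hjm
    rw [L_le]
    refine ⟨(min_le_left _ _).trans (hb 1 j le_rfl hj hjm), fun μ hμ hA => ?_⟩
    exact hb _ _ (by omega) (by have := hA.1; omega) hjm
  have L_e : ∀ j, 1 ≤ j → j ≤ m + n → L j ≤ e (j + 1) := by
    intro j hj hjm
    rw [L_le]
    refine ⟨(min_le_right _ _).trans (he 1 _ le_rfl (by omega) (by omega)), fun μ hμ hA => ?_⟩
    by_contra hcon
    obtain ⟨hA1, hA2⟩ := hA
    by_cases hj' : j + 1 ≤ μ + (n + 1)
    · obtain ⟨w, w1, w2, w3⟩ := h4 μ (j + 1 - μ) hμ (by omega) (by omega) (Or.inr (by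
        have : μ + (j + 1 - μ) = j + 1 := by omega
        rw [this]; omega))
      have := hA2 w (by omega) w2
      omega
    · have := h3 (μ + 1) (by omega) (by omega)
      have := he (n + 1 + (μ + 1)) (j + 1) (by omega) (by omega) (by omega)
      omega
  have hex : ∃ s, s = m + n ∨ a 1 < e (s + 2) ∨ e (s + 1) < L (s + 1) := ⟨m + n, Or.inl rfl⟩
  have hs := Nat.find_spec hex
  have hmin := fun j (hj : j < Nat.find hex) => Nat.find_min hex hj
  have hsmn : Nat.find hex ≤ m + n := Nat.find_min' hex (Or.inl rfl)
  set s := Nat.find hex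
  have hlow : ∀ j, 1 ≤ j → j ≤ s → e (j + 1) ≤ a 1 ∧ L j ≤ e j := by
    intro j hj hjs
    have := hmin (j - 1) (by omega)
    have e1 : j - 1 + 2 = j + 1 := by omega
    have e2 : j - 1 + 1 = j := by omega
    rw [e1, e2] at this
    push Not at this
    exact this.2
  have hes : e (s + 1) ≤ a 1 := by
    rcases Nat.eq_zero_or_pos s with h | h
    · rw [h]; exact h2 1 le_rfl (by omega)
    · exact (hlow s h le_rfl).1
  have hgood : ∃ μ ν, μ + ν = s + 1 ∧ 1 ≤ ν ∧ μ ≤ m ∧ ν ≤ n + 1 ∧ 0 ≤ Tf b e a μ ν := by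
    have hTtop : 0 ≤ Tf b e a m (n + 1) := by unfold Tf; omega
    rcases hs with h | h | h
    · exact ⟨m, n + 1, by omega, by omega, le_rfl, le_rfl, hTtop⟩
    · by_cases hsm : s < m
      · refine good_point b e a m (n + 1) (s + 1) hc' s (by omega) (by omega) ?_
        obtain ⟨w, w1, w2, w3⟩ := h4 s 1 hsm le_rfl (by omega) (Or.inl h)
        exact ⟨w, by omega, w2, w3⟩
      · exact good_point b e a m (n + 1) (s + 1) hc' m (by omega) le_rfl
          ⟨n + 1, by omega, le_rfl, hTtop⟩
    · rw [← not_le, L_le] at h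
      push Not at h
      obtain ⟨μ, hμ, hA, hlt⟩ := h
        ((min_le_right _ _).trans (he 1 _ le_rfl (by omega) (by omega)))
      obtain ⟨hA1, hA2⟩ := hA
      have hν : s + 1 ≤ μ + (n + 1) := by
        by_contra hcon
        have := h3 (μ + 1) (by omega) (by omega)
        have := he (n + 1 + (μ + 1)) (s + 1) (by omega) (by omega) (by omega)
        omega
      have e1 : μ + (s + 1 - μ) = s + 1 := by omega
      obtain ⟨w, w1, w2, w3⟩ := h4 μ (s + 1 - μ) hμ (by omega) (by omega)
        (Or.inr (by rw [e1]; exact hlt))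
      have hw : w = s + 1 - μ := by
        by_contra hne
        have := hA2 w (by omega) w2
        omega
      exact ⟨μ, w, by omega, by omega, by omega, w2, w3⟩
  have hcap : a 1 - e (s + 1) ≤ degT e s - degT L s := by
    obtain ⟨μ, ν, g1, g2, g3, g4, g5⟩ := hgood
    have k1 : ∀ i, μ + i ≤ s → degT L (μ + i) ≤ degT b μ + i * a 1 := by
      intro i
      induction i with
      | zero =>
        intro _
        have := degT_le L b μ (fun j hj hj' => L_b j hj (by omega))
        simpa using this
      | succ i ih =>
        intro hle
        have q1 := ih (by omega)
        have q2 := hlow (μ + i + 1) (by omega) (by omega)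
        have q3 := he (μ + i + 1) (μ + i + 1 + 1) (by omega) (by omega) (by omega)
        rw [← add_assoc, degT_succ]
        push_cast
        linarith [q2.1, q2.2]
    have k2 : ∀ i, i ≤ n + 1 → i * a 1 ≤ degT a i := by
      intro i
      induction i with
      | zero => intro _; simp [degT_zero]
      | succ i ih =>
        intro hle
        have q1 := ih (by omega)
        have q2 := ha 1 (i + 1) le_rfl (by omega) hle
        rw [degT_succ]
        push_cast
        linarith
    obtain ⟨w, rfl⟩ : ∃ w, ν = w + 1 := ⟨ν - 1, by omega⟩
    have q1 := k1 w (by omega)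
    have q2 := k2 (w + 1) g4
    have e1 : μ + w = s := by omega
    rw [e1] at q1
    unfold Tf at g5
    rw [g1, degT_succ e] at g5
    push_cast at q2
    linarith
  obtain ⟨g, g1, g2, g3, g4⟩ := interp L e s (fun i j _ hij _ => L_mono i j hij)
    (fun i j hi hij hj => he i j hi hij (by omega)) (fun j hj hjs => (hlow j hj hjs).2)
    (a 1 - e (s + 1)).toNat (by omega)
  let f : ℕ → ℤ := fun j => if j ≤ s then g j else e (j + 1)
  have f_le : ∀ j, j ≤ s → f j = g j := fun j hj => if_pos hj
  have f_gt : ∀ j, s < j → f j = e (j + 1) := fun j hj => if_neg (by omega)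
  have f_e : ∀ j, 1 ≤ j → j ≤ m + n → f j ≤ e (j + 1) := by
    intro j hj hjm
    rcases le_or_gt j s with h | h
    · rw [f_le j h]
      exact (g3 j hj h).trans (he _ _ hj (by omega) (by omega))
    · rw [f_gt j h]
  have L_f : ∀ j, 1 ≤ j → j ≤ m + n → L j ≤ f j := by
    intro j hj hjm
    rcases le_or_gt j s with h | h
    · rw [f_le j h]; exact g2 j hj h
    · rw [f_gt j h]; exact L_e j hj hjm
  have f_s : degT f s = degT g s := degT_congr _ _ _ fun j _ hj => f_le j hj
  have f_tot : degT f (m + n) = degT e (m + (n + 1)) - a 1 := by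
    have : ∀ i, degT f (s + i) = degT e (s + i + 1) - a 1 := by
      intro i
      induction i with
      | zero => rw [add_zero, f_s, g4, degT_succ]; omega
      | succ i ih =>
        rw [← add_assoc, degT_succ, ih, f_gt (s + i + 1) (by omega), degT_succ e (s + i + 1)]
        ring
    obtain ⟨i, hi⟩ := Nat.exists_eq_add_of_le hsmn
    rw [hi, this, ← hi]
    rfl
  have f_pre : ∀ i, i ≤ m + n → degT e (i + 1) - a 1 ≤ degT f i := by
    have : ∀ i j, i + j = m + n → degT e (i + 1) - a 1 ≤ degT f i := by
      intro i j
      induction j generalizing i with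
      | zero => intro h; rw [add_zero] at h; subst h; rw [f_tot]; rfl
      | succ j ih =>
        intro h
        have q1 := ih (i + 1) (by omega)
        have q2 := f_e (i + 1) (by omega) (by omega)
        rw [degT_succ f, degT_succ e (i + 1)] at q1
        omega
    exact fun i hi => this i (m + n - i) (by omega)
  have a_sh : ∀ i, degT (fun i => a (i + 1)) i = degT a (i + 1) - a 1 := by
    intro i
    induction i with
    | zero => simp [degT]
    | succ i ih => rw [degT_succ, ih, degT_succ a (i + 1)]; ring
  have T_sh : ∀ μ ν, μ + ν ≤ m + n → Tf b e a μ (ν + 1) ≤ Tf b f (fun i => a (i + 1)) μ ν := by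
    intro μ ν h
    unfold Tf
    rw [a_sh]
    have := f_pre (μ + ν) h
    rw [← add_assoc]
    omega
  refine ⟨f, s, hsmn, ?_, ?_, fun j hj _ => f_gt j hj, ?_, ?_, ?_, ?_, ?_⟩
  · intro i j hi hij hj
    rcases le_or_gt j s with h | h
    · rw [f_le j h, f_le i (by omega)]; exact g1 i j hi hij h
    · rw [f_gt j h]
      exact (f_e i hi (by omega)).trans (he _ _ (by omega) (by omega) (by omega))
  · intro j hj hjs
    rw [f_le j hjs]; exact g3 j hj hjs
  · rw [f_s, g4]; omega
  · rw [a_sh, f_tot]; omega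
  · intro i hi hin
    exact (f_e i hi (by omega)).trans (h2 (i + 1) (by omega) (by omega))
  · intro i hi him
    obtain ⟨μ, rfl⟩ : ∃ w, i = w + 1 := ⟨i - 1, by omega⟩
    refine (le_L (n + (μ + 1)) μ (by omega) ⟨by omega, fun ν' h h' => by omega⟩).trans
      (L_f _ (by omega) (by omega))
  · intro μ ν hμ hν hνn hbad
    have : ∃ w, ν < w ∧ w ≤ n + 1 ∧ 0 ≤ Tf b e a μ w := by
      rcases hbad with h | h
      · obtain ⟨w, w1, w2, w3⟩ := h4 μ (ν + 1) hμ (by omega) (by omega) (Or.inl (by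
          have := f_e (μ + 1 + ν) (by omega) (by omega)
          have h' : a (ν + 1) < f (μ + 1 + ν) := h
          rw [← add_assoc]; omega))
        exact ⟨w, by omega, w2, w3⟩
      · by_contra hcon
        push Not at hcon
        have := le_L (μ + ν) μ hμ ⟨by omega, fun ν' q q' => hcon ν' (by omega) q'⟩
        have := L_f (μ + ν) (by omega) (by omega)
        omega
    obtain ⟨w, w1, w2, w3⟩ := this
    obtain ⟨v, rfl⟩ : ∃ v, w = v + 1 := ⟨w - 1, by omega⟩
    exact ⟨v, by omega, by omega, w3.trans (T_sh μ v (by omega))⟩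

end Comb

section Suff
open MvPolynomial

variable {k : Type} [Field k]

lemma split_xy {p : MvPolynomial (Fin 2) k} {d : ℤ} (hp : Hm p d) (A B : ℕ)
    (hd : (A : ℤ) + B - 1 ≤ d) : ∃ t v : MvPolynomial (Fin 2) k, Hm t (d - A) ∧ Hm v (d - B) ∧
      p = t * X 0 ^ A + v * X 1 ^ B := by
  have key : ∃ t v : MvPolynomial (Fin 2) k, p = t * X 0 ^ A + v * X 1 ^ B := by
    have hmem : p ∈ Ideal.span {(X 0 : MvPolynomial (Fin 2) k) ^ A, X 1 ^ B} := by
      rcases lt_or_ge d 0 with h | h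
      · rw [hp.2 h]; exact Ideal.zero_mem _
      have hh := hp.1 h
      rw [← support_sum_monomial_coeff p]
      refine Ideal.sum_mem _ fun s hs => ?_
      have hdeg := hh (mem_support_iff.1 hs)
      have hs2 : s 0 + s 1 = d.toNat := by
        rw [← hdeg, Finsupp.weight_apply, Finsupp.sum_fintype _ _ (by simp)]
        simp [Fin.sum_univ_two]
      have hx : ∀ (i : Fin 2) (C : ℕ), C ≤ s i →
          monomial s (coeff s p) = monomial (s - Finsupp.single i C) (coeff s p) * X i ^ C := by
        intro i C hC
        rw [X_pow_eq_monomial, monomial_mul, mul_one, tsub_add_cancel_of_le]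
        rwa [Finsupp.single_le_iff]
      rcases le_or_gt A (s 0) with h0 | h0
      · rw [hx 0 A h0]
        exact Ideal.mul_mem_left _ _ (Ideal.subset_span (by simp))
      · rw [hx 1 B (by omega)]
        exact Ideal.mul_mem_left _ _ (Ideal.subset_span (by simp))
    obtain ⟨t, v, h⟩ := Ideal.mem_span_pair.1 hmem
    exact ⟨t, v, h.symm⟩
  obtain ⟨t, v, h⟩ := key
  refine ⟨hcmp (d - A) t, hcmp (d - B) v, hcmp_hm _ _, hcmp_hm _ _, ?_⟩
  have h2 : ∀ q r : MvPolynomial (Fin 2) k, hcmp d (q + r) = hcmp d q + hcmp d r := by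
    intro q r
    have := hcmp_sum (Finset.univ : Finset (Fin 2)) d ![q, r]
    simpa [Fin.sum_univ_two] using this
  have h1 := hcmp_self hp
  rw [← h1, h, h2, mul_comm t, mul_comm v, hcmp_mul (Hm.Xpow 0 A rfl) t (d' := d - A) (by ring),
    hcmp_mul (Hm.Xpow 1 B rfl) v (d' := d - B) (by ring), mul_comm, mul_comm (X 1 ^ B)]

lemma bidiag (e f : ℕ → ℤ) (α β : ℕ → ℕ) : ∀ s : ℕ,
    (∀ j, 1 ≤ j → j ≤ s → e j = f j + α j) → (∀ j, 1 ≤ j → j ≤ s → e (j + 1) = f j + β j) →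
    ∃ φ : ℕ → MvPolynomial (Fin 2) k,
      φ (s + 1) = X 0 ^ (∑ j ∈ Icc 1 s, α j) ∧ (∃ (B : ℕ) (ε : _), φ 1 * ε = X 1 ^ B) ∧
      (∀ j, 1 ≤ j → j ≤ s + 1 → Hm (φ j) (e (s + 1) + (∑ j ∈ Icc 1 s, α j : ℕ) - e j)) ∧
      (∀ j, 1 ≤ j → j ≤ s → φ j * X 0 ^ α j + φ (j + 1) * X 1 ^ β j = 0) ∧
      ∀ (c : ℤ) (w : ℕ → MvPolynomial (Fin 2) k), e (s + 1) + (∑ j ∈ Icc 1 s, α j : ℕ) ≤ c →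
        (∀ j, 1 ≤ j → j ≤ s → Hm (w j) (c - f j)) →
        ∃ u : ℕ → MvPolynomial (Fin 2) k, (∀ j, 1 ≤ j → j ≤ s + 1 → Hm (u j) (c - e j)) ∧
          ∀ j, 1 ≤ j → j ≤ s → u j * X 0 ^ α j + u (j + 1) * X 1 ^ β j = w j := by
  intro s
  induction s with
  | zero =>
    intro _ _
    refine ⟨fun _ => 1, by simp, ⟨0, 1, by simp⟩, ?_, fun j h h' => by omega, ?_⟩
    · intro j h h'
      obtain rfl : j = 1 := by omega
      exact Hm.of (isHomogeneous_one _ _) (by simp)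
    · intro c w _ _
      exact ⟨fun _ => 0, fun _ _ _ => Hm.zero _, fun j h h' => by omega⟩
  | succ s ih =>
    intro hα hβ
    obtain ⟨φ, h1, ⟨B, ε, h2⟩, h3, h4, h5⟩ :=
      ih (fun j h h' => hα j h (by omega)) (fun j h h' => hβ j h (by omega))
    have hA : ∑ j ∈ Icc 1 (s + 1), α j = ∑ j ∈ Icc 1 s, α j + α (s + 1) :=
      Finset.sum_Icc_succ_top (by omega) _
    rw [hA]
    set A := ∑ j ∈ Icc 1 s, α j with hAdef
    have a1 := hα (s + 1) (by omega) le_rfl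
    have b1 := hβ (s + 1) (by omega) le_rfl
    refine ⟨fun j => if j ≤ s + 1 then - X 1 ^ β (s + 1) * φ j else X 0 ^ (A + α (s + 1)), ?_,
      ⟨B + β (s + 1), -ε, ?_⟩, ?_, ?_, ?_⟩
    · simp
    · dsimp only
      rw [if_pos (by omega), pow_add, ← h2]; ring
    · intro j hj hj'
      dsimp only
      split_ifs with h
      · refine Hm.mul' (Hm.neg (Hm.Xpow 1 (β (s + 1)) rfl)) (h3 j hj h) ?_
        push_cast
        omega
      · obtain rfl : j = s + 1 + 1 := by omega
        refine Hm.Xpow 0 _ (by ring)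
    · intro j hj hj'
      dsimp only
      rw [if_pos (by omega)]
      split_ifs with h
      · have := h4 j hj (by omega)
        linear_combination (- X 1 ^ β (s + 1)) * this
      · obtain rfl : j = s + 1 := by omega
        rw [h1]; ring
    · intro c w hc hw
      obtain ⟨u, u1, u2⟩ := h5 c w (by push_cast at hc ⊢; omega) (fun j h h' => hw j h (by omega))
      have hm : Hm (w (s + 1) - u (s + 1) * X 0 ^ α (s + 1)) (c - f (s + 1)) :=
        (hw (s + 1) (by omega) le_rfl).sub
          ((u1 (s + 1) (by omega) le_rfl).mul' (Hm.Xpow 0 _ rfl) (by omega))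
      obtain ⟨t, v, t1, v1, tv⟩ := split_xy hm (A + α (s + 1)) (β (s + 1))
        (by push_cast at hc ⊢; omega)
      refine ⟨fun j => if j ≤ s + 1 then u j + t * φ j else v, ?_, ?_⟩
      · intro j hj hj'
        dsimp only
        split_ifs with h
        · refine (u1 j hj h).add (t1.mul' (h3 j hj h) ?_)
          push_cast
          omega
        · obtain rfl : j = s + 1 + 1 := by omega
          rw [show c - e (s + 1 + 1) = c - f (s + 1) - β (s + 1) by omega]
          exact v1
      · intro j hj hj'
        dsimp only
        rw [if_pos (by omega)]
        split_ifs with h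
        · have q1 := h4 j hj (by omega)
          have q2 := u2 j hj (by omega)
          linear_combination t * q1 + q2
        · obtain rfl : j = s + 1 := by omega
          rw [h1]
          rw [pow_add] at tv
          linear_combination -tv

lemma onestep (M s : ℕ) (e f : ℕ → ℤ) (a1 : ℤ) (hs : s ≤ M) (he : Incr e (M + 1))
    (h1 : ∀ j, 1 ≤ j → j ≤ s → f j ≤ e j) (h2 : ∀ j, s < j → j ≤ M → f j = e (j + 1))
    (ha : a1 = e (s + 1) + (degT e s - degT f s)) :
    ∃ (φ : Fin (M + 1) → MvPolynomial (Fin 2) k)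
      (ψ : Matrix (Fin (M + 1)) (Fin M) (MvPolynomial (Fin 2) k)),
      (∀ j, Hm (φ j) (a1 - e (j.1 + 1))) ∧ (∀ i j, Hm (ψ i j) (e (i.1 + 1) - f (j.1 + 1))) ∧
      Matrix.vecMul φ ψ = 0 ∧
      (∀ t : Fin 2, ∃ (N : ℕ) (v : Fin (M + 1) → _), φ ⬝ᵥ v = X t ^ N) ∧
      ∀ (c : ℤ) (w : Fin M → MvPolynomial (Fin 2) k), a1 ≤ c → (∀ j, Hm (w j) (c - f (j.1 + 1))) →
        ∃ u : Fin (M + 1) → MvPolynomial (Fin 2) k, (∀ j, Hm (u j) (c - e (j.1 + 1))) ∧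
          Matrix.vecMul u ψ = w := by
  have g1 : ∀ j, 1 ≤ j → j ≤ s → e j = f j + ((e j - f j).toNat : ℕ) := by
    intro j hj hj'; have := h1 j hj hj'; omega
  have g2 : ∀ j, 1 ≤ j → j ≤ s → e (j + 1) = f j + ((e (j + 1) - f j).toNat : ℕ) := by
    intro j hj hj'
    have := h1 j hj hj'
    have := he j (j + 1) hj (by omega) (by omega)
    omega
  have hA : ((∑ j ∈ Icc 1 s, (e j - f j).toNat : ℕ) : ℤ) = degT e s - degT f s := by
    unfold degT
    rw [← Finset.sum_sub_distrib]
    push_cast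
    refine Finset.sum_congr rfl fun j hj => ?_
    have := h1 j (Finset.mem_Icc.1 hj).1 (Finset.mem_Icc.1 hj).2
    omega
  obtain ⟨φ, p1, ⟨B, ε, p2⟩, p3, p4, p5⟩ := bidiag (k := k) e f _ _ s g1 g2
  rw [hA, ← ha] at p3 p5
  let P : Fin M → MvPolynomial (Fin 2) k := fun j =>
    if j.1 < s then X 0 ^ (e (j.1 + 1) - f (j.1 + 1)).toNat else 0
  let Q : Fin M → MvPolynomial (Fin 2) k := fun j => X 1 ^ (e (j.1 + 1 + 1) - f (j.1 + 1)).toNat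
  let ψ : Matrix (Fin (M + 1)) (Fin M) (MvPolynomial (Fin 2) k) := Matrix.of fun i j =>
    (if i = j.castSucc then P j else 0) + (if i = j.succ then Q j else 0)
  have hψ : ∀ (u : Fin (M + 1) → MvPolynomial (Fin 2) k) j,
      Matrix.vecMul u ψ j = u j.castSucc * P j + u j.succ * Q j := by
    intro u j
    simp only [Matrix.vecMul, dotProduct, ψ, Matrix.of_apply, mul_add, Finset.sum_add_distrib,
      mul_ite, mul_zero, Finset.sum_ite_eq', Finset.mem_univ, if_true]
  refine ⟨fun j => if j.1 < s + 1 then φ (j.1 + 1) else 0, ψ, ?_, ?_, ?_, ?_, ?_⟩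
  · intro j
    dsimp only
    split_ifs with h
    · exact p3 _ (by omega) (by omega)
    · exact Hm.zero _
  · intro i j
    refine Hm.add ?_ ?_
    · split_ifs with h
      · subst h
        simp only [P, Fin.val_castSucc]
        split_ifs with h
        · refine Hm.Xpow _ _ ?_
          have := g1 (j.1 + 1) (by omega) (by omega)
          omega
        · exact Hm.zero _
      · exact Hm.zero _
    · split_ifs with h
      · subst h
        simp only [Q, Fin.val_succ]
        refine Hm.Xpow _ _ ?_
        rcases lt_or_ge j.1 s with h | h
        · have := g2 (j.1 + 1) (by omega) (by omega)
          omega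
        · have := h2 (j.1 + 1) (by omega) (by omega)
          omega
      · exact Hm.zero _
  · ext1 j
    rw [hψ]
    simp only [Fin.val_castSucc, Fin.val_succ, Pi.zero_apply, P, Q]
    rcases lt_or_ge j.1 s with h | h
    · rw [if_pos (by omega), if_pos h, if_pos (by omega)]
      exact p4 (j.1 + 1) (by omega) (by omega)
    · rw [if_neg (by omega : ¬ (j.1 < s)), if_neg (by omega : ¬ (j.1 + 1 < s + 1))]
      simp
  · intro t
    fin_cases t
    · refine ⟨∑ j ∈ Icc 1 s, (e j - f j).toNat, Pi.single ⟨s, by omega⟩ 1, ?_⟩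
      simp [p1]
    · refine ⟨B, Pi.single 0 ε, ?_⟩
      simp [p2]
  · intro c w hc hw
    obtain ⟨u, u1, u2⟩ := p5 c (fun j => if h : j - 1 < M then w ⟨j - 1, h⟩ else 0) hc (by
      intro j hj hj'
      rw [dif_pos (by omega)]
      have := hw ⟨j - 1, by omega⟩
      rwa [show j - 1 + 1 = j by omega] at this)
    refine ⟨fun j => if j.1 < s + 1 then u (j.1 + 1) else
      if h : j.1 - 1 < M then w ⟨j.1 - 1, h⟩ else 0, ?_, ?_⟩
    · intro j
      dsimp only
      split_ifs with h h'
      · exact u1 _ (by omega) (by omega)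
      · have := hw ⟨j.1 - 1, h'⟩
        rwa [h2 _ (by dsimp only; omega) (by dsimp only; omega), show j.1 - 1 + 1 = j.1 by omega] at this
      · exact Hm.zero _
    · ext1 j
      rw [hψ]
      simp only [Fin.val_castSucc, Fin.val_succ, P, Q]
      rcases lt_or_ge j.1 s with h | h
      · rw [if_pos (by omega), if_pos h, if_pos (by omega)]
        have := u2 (j.1 + 1) (by omega) (by omega)
        simpa using this
      · rw [if_neg (by omega : ¬ (j.1 < s)), if_neg (by omega : ¬ (j.1 + 1 < s + 1)), dif_pos (show j.1 + 1 - 1 < M by omega),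
          h2 (j.1 + 1) (by omega) (by omega)]
        simp

lemma suff (b : ℕ → ℤ) (m : ℕ) (hb : Incr b m) : ∀ (n : ℕ) (e a : ℕ → ℤ), Incr e (m + n) →
    Incr a n → Crit2 b e a m n → GReal k b e a m n := by
  intro n
  induction n with
  | zero =>
    rintro e a he ha ⟨h1, -, h3, -⟩
    have hbe : ∀ i, 1 ≤ i → i ≤ m → e i = b i := by
      have hz : ∑ i ∈ Icc 1 m, (e i - b i) = 0 := by
        rw [Finset.sum_sub_distrib]
        unfold degT at h1
        simp at h1
        omega
      have := (Finset.sum_eq_zero_iff_of_nonneg (fun i hi => by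
        have := h3 i (Finset.mem_Icc.1 hi).1 (Finset.mem_Icc.1 hi).2
        rw [zero_add] at this
        omega)).1 hz
      intro i hi him
      have := this i (Finset.mem_Icc.2 ⟨hi, him⟩)
      omega
    refine ⟨0, (1 : Matrix (Fin m) (Fin m) _), fun i => i.elim0, fun i j => ?_, ?_,
      fun t => ⟨0, 0, (1 : Matrix (Fin m) (Fin m) _), ?_, ?_⟩⟩
    · change Hm ((1 : Matrix (Fin m) (Fin m) (MvPolynomial (Fin 2) k)) i j) _
      rw [Matrix.one_apply]
      split_ifs with h
      · subst h
        refine Hm.of (isHomogeneous_one _ _) ?_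
        have := i.2
        rw [hbe _ (by omega) (by omega)]
        simp
      · exact Hm.zero _
    · ext i; exact i.elim0
    · ext i; exact i.elim0
    · simp only [pow_zero, one_smul]
      exact Matrix.one_mul _
  | succ n ih =>
    intro e a he ha hc
    obtain ⟨f, s, hs, hf, f1, f2, f3, f4⟩ := exists_f b e a m n hb he ha hc
    obtain ⟨φ2, ψ2, d1, d2, d3, d4⟩ := ih f (fun i => a (i + 1)) hf
      (fun i j hi hij hj => ha _ _ (by omega) (by omega) (by omega)) f4
    obtain ⟨φ1, ψ1, c1, c2, c3, c4, c5⟩ := onestep (k := k) (m + n) s e f (a 1) hs he f1 f2 f3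
    have hl : ∀ i : Fin n, ∃ u : Fin (m + n + 1) → MvPolynomial (Fin 2) k,
        (∀ j, Hm (u j) (a (i.1 + 1 + 1) - e (j.1 + 1))) ∧ Matrix.vecMul u ψ1 = φ2 i :=
      fun i => c5 _ _ (ha 1 _ le_rfl (by omega) (by omega)) (d1 i)
    choose φt t1 t2 using hl
    have t3 : (Matrix.of φt) * ψ1 = φ2 := by
      exact funext fun i => t2 i
    have hρ : ∀ t : Fin 2, ∃ (N : ℕ) (ρ : Matrix (Fin (m + n)) (Fin (m + n + 1)) (MvPolynomial (Fin 2) k)),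
        ρ * ψ1 = (X t : MvPolynomial (Fin 2) k) ^ N • 1 := by
      intro t
      let N : ℕ := ∑ i : Fin (m + n), (a 1 - f (i.1 + 1)).toNat
      have hN : ∀ i : Fin (m + n), a 1 ≤ N + f (i.1 + 1) := by
        intro i
        have : (a 1 - f (i.1 + 1)).toNat ≤ N :=
          Finset.single_le_sum (f := fun i : Fin (m + n) => (a 1 - f (i.1 + 1)).toNat)
            (fun _ _ => Nat.zero_le _) (Finset.mem_univ i)
        omega
      have : ∀ i : Fin (m + n), ∃ u : Fin (m + n + 1) → MvPolynomial (Fin 2) k,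
          Matrix.vecMul u ψ1 = Pi.single i (X t ^ N) := by
        intro i
        obtain ⟨u, -, hu⟩ := c5 (N + f (i.1 + 1)) (Pi.single i (X t ^ N)) (hN i) (by
          intro j
          by_cases h : j = i
          · subst h
            rw [Pi.single_eq_same]
            exact Hm.Xpow _ _ (by ring)
          · rw [Pi.single_eq_of_ne h]; exact Hm.zero _)
        exact ⟨u, hu⟩
      choose ρ hρ using this
      refine ⟨N, Matrix.of ρ, ?_⟩
      refine funext fun i => (hρ i).trans ?_
      ext1 j
      simp [Pi.single_apply, Matrix.one_apply, eq_comm]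
    let φ : Matrix (Fin (n + 1)) (Fin (m + n + 1)) (MvPolynomial (Fin 2) k) :=
      Matrix.of (Fin.cons φ1 φt)
    refine ⟨φ, ψ1 * ψ2, ?_, ?_, ?_, ?_⟩
    · intro i
      refine Fin.cases ?_ (fun i => ?_) i
      · exact c1
      · exact t1 i
    · intro i j
      change Hm ((ψ1 * ψ2) i j) _
      rw [Matrix.mul_apply]
      exact Hm.sum _ _ fun l _ => (c2 i l).mul' (d2 l j) (by ring)
    · refine funext fun i => ?_
      refine Fin.cases ?_ (fun i => ?_) i
      · change Matrix.vecMul φ1 (ψ1 * ψ2) = 0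
        rw [← Matrix.vecMul_vecMul, c3, Matrix.zero_vecMul]
      · change Matrix.vecMul (φt i) (ψ1 * ψ2) = 0
        rw [← Matrix.vecMul_vecMul, t2]
        exact congrFun d3 i
    · intro t
      obtain ⟨N1, v, hv⟩ := c4 t
      obtain ⟨N2, σ2, ρ2, hσ2, hρ2⟩ := d4 t
      obtain ⟨N3, ρ1, hρ1⟩ := hρ t
      have hphiC : ∀ w, φ1 ⬝ᵥ Matrix.mulVec ψ1 w = 0 := by
        intro w
        rw [Matrix.dotProduct_mulVec, c3, zero_dotProduct]
      let c0 : Fin (m + n + 1) → MvPolynomial (Fin 2) k :=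
        (X t : MvPolynomial (Fin 2) k) ^ N2 • v -
          Matrix.mulVec ψ1 (Matrix.mulVec σ2 (Matrix.mulVec (Matrix.of φt) v))
      let C : Fin n → Fin (m + n + 1) → MvPolynomial (Fin 2) k := fun j =>
        (X t : MvPolynomial (Fin 2) k) ^ N1 • Matrix.mulVec ψ1 (fun l => σ2 l j)
      let σ : Matrix (Fin (m + n + 1)) (Fin (n + 1)) (MvPolynomial (Fin 2) k) :=
        (Matrix.of (Fin.cons c0 C)).transpose
      have hσ : φ * σ = (X t : MvPolynomial (Fin 2) k) ^ (N1 + N2) • 1 := by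
        ext1 i j
        refine Fin.cases ?_ (fun i => ?_) i <;> refine Fin.cases ?_ (fun j => ?_) j
        · change φ1 ⬝ᵥ c0 = _
          simp only [c0, dotProduct_sub, hphiC, dotProduct_smul, hv]
          simp [pow_add, mul_comm]
        · change φ1 ⬝ᵥ C j = _
          simp only [C, dotProduct_smul, hphiC]
          simp [Matrix.one_apply, (Fin.succ_ne_zero j).symm]
        · change (Matrix.of φt).mulVec c0 i = _
          simp only [c0, Matrix.mulVec_sub, Matrix.mulVec_smul]
          rw [Matrix.mulVec_mulVec, t3, Matrix.mulVec_mulVec, hσ2, Matrix.smul_mulVec,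
            Matrix.one_mulVec]
          simp [Matrix.one_apply]
        · change (Matrix.of φt).mulVec (C j) i = _
          simp only [C, Matrix.mulVec_smul]
          rw [Matrix.mulVec_mulVec, t3]
          have := congrFun (congrFun hσ2 i) j
          change φ2.mulVec (fun l => σ2 l j) i = _ at this
          rw [Pi.smul_apply, this]
          simp [Matrix.one_apply, pow_add, mul_assoc]
      have hρ' : ρ2 * ρ1 * (ψ1 * ψ2) = (X t : MvPolynomial (Fin 2) k) ^ (N3 + N2) • 1 := by
        rw [Matrix.mul_assoc, ← Matrix.mul_assoc ρ1, hρ1, Matrix.smul_mul, Matrix.one_mul,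
          Matrix.mul_smul, hρ2, smul_smul, pow_add]
      refine ⟨N1 + N2 + N3, (X t : MvPolynomial (Fin 2) k) ^ N3 • σ,
        (X t : MvPolynomial (Fin 2) k) ^ N1 • (ρ2 * ρ1), ?_, ?_⟩
      · refine (Matrix.mul_smul _ _ _).trans ?_
        rw [hσ, smul_smul, ← pow_add, add_comm N3]
      · refine (Matrix.smul_mul _ _ _).trans ?_
        rw [hρ', smul_smul, ← pow_add]
        congr 2
        omega

end Suff

section Nec
open MvPolynomial

lemma finrank_map_ker {K V W : Type*} [Field K] [AddCommGroup V] [Module K V] [AddCommGroup W]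
    [Module K W] (f : V →ₗ[K] W) (P : Submodule K V) [FiniteDimensional K P] :
    Module.finrank K (P.map f) + Module.finrank K (P ⊓ LinearMap.ker f : Submodule K V) =
      Module.finrank K P := by
  have h := LinearMap.finrank_range_add_finrank_ker (f.domRestrict P)
  rw [LinearMap.range_domRestrict] at h
  rw [← h, ← Submodule.map_comap_subtype, Submodule.finrank_map_subtype_eq]
  rfl

lemma coord_set {K : Type*} [Field K] {N : ℕ} : ∀ (s : ℕ) (W : Submodule K (Fin N → K)),
    Module.finrank K W ≤ s → ∃ L : Finset (Fin N), L.card ≤ s ∧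
      ∀ w ∈ W, (∀ i ∈ L, w i = 0) → w = 0 := by
  intro s
  induction s with
  | zero =>
    intro W hW
    have : W = ⊥ := Submodule.finrank_eq_zero.1 (by omega)
    exact ⟨∅, by simp, fun w hw _ => by simpa [this] using hw⟩
  | succ s ih =>
    intro W hW
    by_cases hb : W = ⊥
    · exact ⟨∅, by simp, fun w hw _ => by simpa [hb] using hw⟩
    obtain ⟨w, hw, hw0⟩ := Submodule.exists_mem_ne_zero_of_ne_bot hb
    obtain ⟨i, hi⟩ := Function.ne_iff.1 hw0
    have hlt : W ⊓ LinearMap.ker (LinearMap.proj i : (Fin N → K) →ₗ[K] K) < W := by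
      refine lt_of_le_of_ne inf_le_left fun h => hi ?_
      have : w ∈ W ⊓ LinearMap.ker (LinearMap.proj i : (Fin N → K) →ₗ[K] K) := by rw [h]; exact hw
      simpa using this.2
    have := Submodule.finrank_lt_finrank_of_lt hlt
    obtain ⟨L, hL, hL2⟩ := ih (W ⊓ LinearMap.ker (LinearMap.proj i : (Fin N → K) →ₗ[K] K)) (by omega)
    refine ⟨insert i L, (Finset.card_insert_le _ _).trans (by omega), fun u hu hu2 => ?_⟩
    exact hL2 u ⟨hu, by simpa using hu2 i (by simp)⟩ fun l hl => hu2 l (by simp [hl])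

/-- vectors vanishing at the first `j` coordinates -/
def Vs (K : Type*) [Field K] (N j : ℕ) : Submodule K (Fin N → K) where
  carrier := {v | ∀ i : Fin N, i.1 < j → v i = 0}
  add_mem' := by
    intro a b ha hb i hi
    simp [ha i hi, hb i hi]
  zero_mem' := by intro i _; rfl
  smul_mem' := by
    intro c a ha i hi
    simp [ha i hi]

lemma mem_Vs {K : Type*} [Field K] {N j : ℕ} {v : Fin N → K} :
    v ∈ Vs K N j ↔ ∀ i : Fin N, i.1 < j → v i = 0 := Iff.rfl

lemma card_ge (N j : ℕ) : (Finset.univ.filter fun i : Fin N => j ≤ i.1).card = N - j := by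
  have := Finset.card_map Fin.valEmbedding (s := Finset.univ.filter fun i : Fin N => j ≤ i.1)
  rw [← this]
  have : (Finset.univ.filter fun i : Fin N => j ≤ i.1).map Fin.valEmbedding = Finset.Ico j N := by
    ext x
    simp only [Finset.mem_map, Finset.mem_filter, Finset.mem_univ, true_and, Finset.mem_Ico,
      Fin.valEmbedding_apply]
    constructor
    · rintro ⟨y, hy, rfl⟩; exact ⟨hy, y.2⟩
    · rintro ⟨h1, h2⟩; exact ⟨⟨x, h2⟩, h1, rfl⟩
  rw [this, Nat.card_Ico]

lemma finrank_Vs (K : Type*) [Field K] (N j : ℕ) : Module.finrank K (Vs K N j) = N - j := by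
  let E : Vs K N j ≃ₗ[K] ({i : Fin N // j ≤ i.1} → K) :=
    { toFun := fun v i => v.1 i.1
      map_add' := fun _ _ => rfl
      map_smul' := fun _ _ => rfl
      invFun := fun u => ⟨fun i => if h : j ≤ i.1 then u ⟨i, h⟩ else 0, fun i hi => dif_neg (by omega)⟩
      left_inv := by
        intro v
        ext i
        by_cases h : j ≤ i.1
        · simp [h]
        · simp [h, v.2 i (by omega)]
      right_inv := by
        intro u
        ext i
        simp [i.2] }
  rw [E.finrank_eq, Module.finrank_fintype_fun_eq_card, Fintype.card_subtype, card_ge]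

lemma disc_ivt (g : ℕ → ℕ) (hg : ∀ j, g j ≤ g (j + 1) + 1) (s : ℕ) :
    ∀ (d j : ℕ), s ≤ g j → g (j + d) ≤ s → ∃ i, j ≤ i ∧ i ≤ j + d ∧ g i = s := by
  intro d
  induction d with
  | zero => intro j h1 h2; exact ⟨j, le_rfl, le_rfl, le_antisymm h2 h1⟩
  | succ d ih =>
    intro j h1 h2
    rcases Nat.eq_or_lt_of_le h1 with h | h
    · exact ⟨j, le_rfl, by omega, h.symm⟩
    · obtain ⟨i, h3, h4, h5⟩ := ih (j + 1) (by have := hg j; omega)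
        (by rwa [show j + 1 + d = j + (d + 1) by ring])
      exact ⟨i, by omega, by omega, h5⟩

variable {k : Type} [Field k]

lemma finrank_hom (d : ℕ) : Module.finrank k (homogeneousSubmodule (Fin 2) k d) = d + 1 := by
  let E : Fin (d + 1) ≃ {s : Fin 2 →₀ ℕ | s.degree = d} :=
    { toFun := fun i => ⟨Finsupp.single 0 i.1 + Finsupp.single 1 (d - i.1), by
        have := i.2
        change Finsupp.degree _ = d
        rw [map_add, Finsupp.degree_single, Finsupp.degree_single]
        omega⟩
      invFun := fun s => ⟨s.1 0, by
        have h : s.1.degree = d := s.2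
        rw [Finsupp.degree_eq_sum, Fin.sum_univ_two] at h
        omega⟩
      left_inv := by
        intro i
        ext
        simp
      right_inv := by
        intro s
        have h : s.1.degree = d := s.2
        rw [Finsupp.degree_eq_sum, Fin.sum_univ_two] at h
        ext i
        fin_cases i
        · simp
        · simp
          omega }
  rw [homogeneousSubmodule_eq_finsupp_supported,
    (AddMonoidAlgebra.supportedEquivFinsupp {s : Fin 2 →₀ ℕ | s.degree = d}).finrank_eq,
    ← (Finsupp.domLCongr (R := k) (M := k) E).finrank_eq, Module.finrank_finsupp_self,
    Fintype.card_fin]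

instance fin_hom (d : ℕ) : Module.Finite k (homogeneousSubmodule (Fin 2) k d) :=
  Module.Finite.iff_fg.2 (homogeneousSubmodule_fg _ _ d)

lemma top_sum (a : ℕ → ℤ) : ∀ (n : ℕ), Incr a n → ∀ I : Finset ℕ, I ⊆ range n →
    ∑ i ∈ I, a (i + 1) ≤ degT a n - degT a (n - I.card) := by
  intro n
  induction n with
  | zero => intro _ I hI; simp at hI; subst hI; simp
  | succ n ih =>
    intro ha I hI
    have ha' : Incr a n := fun i j h1 h2 h3 => ha i j h1 h2 (by omega)
    by_cases h : n ∈ I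
    · have h1 := ih ha' (I.erase n) (by
        intro x hx
        have := hI (Finset.mem_of_mem_erase hx)
        have := Finset.ne_of_mem_erase hx
        simp at *
        omega)
      have hc := Finset.card_erase_of_mem h
      have hp : 0 < I.card := Finset.card_pos.2 ⟨n, h⟩
      rw [hc] at h1
      rw [← Finset.add_sum_erase _ _ h, degT_succ]
      rw [show n - (I.card - 1) = n + 1 - I.card by omega] at h1
      omega
    · have hI' : I ⊆ range n := by
        intro x hx
        have := hI hx
        have : x ≠ n := fun h' => h (h' ▸ hx)
        simp at *
        omega
      have h1 := ih ha' I hI'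
      have hc : I.card ≤ n := by simpa using Finset.card_le_card hI'
      rw [degT_succ, show n + 1 - I.card = (n - I.card) + 1 by omega, degT_succ]
      have := ha (n - I.card + 1) (n + 1) (by omega) (by omega) le_rfl
      omega

lemma top_sum_fin (a : ℕ → ℤ) (n : ℕ) (ha : Incr a n) (I : Finset (Fin n)) :
    ∑ i ∈ I, a (i.1 + 1) ≤ degT a n - degT a (n - I.card) := by
  have := top_sum a n ha (I.map Fin.valEmbedding) (by
    intro x hx
    simp only [Finset.mem_map] at hx
    obtain ⟨y, -, rfl⟩ := hx
    simp)
  simpa using this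

lemma tail_sum (e : ℕ → ℤ) (N j : ℕ) (hj : j ≤ N) :
    ∑ i ∈ Finset.univ.filter (fun i : Fin N => j ≤ i.1), e (i.1 + 1) = degT e N - degT e j := by
  rw [Finset.sum_filter, Fin.sum_univ_eq_sum_range (fun i => if j ≤ i then e (i + 1) else 0)]
  induction N, hj using Nat.le_induction with
  | base =>
    rw [sub_self]
    exact Finset.sum_eq_zero fun i hi => if_neg (by simp at hi; omega)
  | succ N hN ih => rw [Finset.sum_range_succ, ih, if_pos hN, degT_succ]; ring

end Nec

section Nec2
open MvPolynomial

variable {k : Type} [Field k]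

lemma Hm.smul {p : MvPolynomial (Fin 2) k} {d : ℤ} (hp : Hm p d) (c : k) : Hm (c • p) d :=
  ⟨fun h => (homogeneousSubmodule (Fin 2) k d.toNat).smul_mem c (hp.1 h),
   fun h => by rw [hp.2 h, smul_zero]⟩

/-- homogeneous vectors supported on `I` -/
def Hs (k : Type) [Field k] {N : ℕ} (d : Fin N → ℤ) (I : Finset (Fin N)) :
    Submodule k (Fin N → MvPolynomial (Fin 2) k) where
  carrier := {w | ∀ i, Hm (w i) (d i) ∧ (i ∉ I → w i = 0)}
  add_mem' := by
    intro a b ha hb i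
    exact ⟨(ha i).1.add (hb i).1, fun h => by simp [(ha i).2 h, (hb i).2 h]⟩
  zero_mem' := fun i => ⟨Hm.zero _, fun _ => rfl⟩
  smul_mem' := by
    intro c a ha i
    exact ⟨(ha i).1.smul c, fun h => by simp [(ha i).2 h]⟩

lemma mem_Hs {N : ℕ} {d : Fin N → ℤ} {I : Finset (Fin N)} {w : Fin N → MvPolynomial (Fin 2) k} :
    w ∈ Hs k d I ↔ ∀ i, Hm (w i) (d i) ∧ (i ∉ I → w i = 0) := Iff.rfl

lemma finrank_pi_hom {N : ℕ} (d : Fin N → ℤ) (hd : ∀ i, 0 ≤ d i) (I : Finset (Fin N)) :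
    (Module.finrank k (∀ i : I, homogeneousSubmodule (Fin 2) k (d i.1).toNat) : ℤ) =
      ∑ i ∈ I, (d i + 1) := by
  rw [Module.finrank_pi_fintype]
  simp only [finrank_hom]
  push_cast
  rw [← Finset.sum_coe_sort I (fun i => d i + 1)]
  refine Finset.sum_congr rfl fun i _ => ?_
  have := hd i.1
  omega

lemma upper {N : ℕ} (W : Submodule k (Fin N → MvPolynomial (Fin 2) k)) (d : Fin N → ℤ)
    (hd : ∀ i, 0 ≤ d i) (I : Finset (Fin N)) (h1 : ∀ w ∈ W, ∀ i, Hm (w i) (d i))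
    (h2 : ∀ w ∈ W, (∀ i ∈ I, w i = 0) → w = 0) :
    Module.Finite k W ∧ (Module.finrank k W : ℤ) ≤ ∑ i ∈ I, (d i + 1) := by
  let f : W →ₗ[k] (∀ i : I, homogeneousSubmodule (Fin 2) k (d i.1).toNat) :=
    { toFun := fun w i => ⟨w.1 i.1, (h1 w.1 w.2 i.1).1 (hd _)⟩
      map_add' := fun _ _ => rfl
      map_smul' := fun _ _ => rfl }
  have hf : Function.Injective f := by
    rw [← LinearMap.ker_eq_bot, LinearMap.ker_eq_bot']
    intro w hw
    apply Subtype.ext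
    refine h2 w.1 w.2 fun i hi => ?_
    exact congrArg Subtype.val (congrFun hw ⟨i, hi⟩)
  refine ⟨Module.Finite.of_injective f hf, ?_⟩
  rw [← finrank_pi_hom (k := k) d hd]
  exact_mod_cast LinearMap.finrank_le_finrank_of_injective hf

lemma Hs_finite {N : ℕ} (d : Fin N → ℤ) (hd : ∀ i, 0 ≤ d i) (I : Finset (Fin N)) :
    Module.Finite k (Hs k d I) :=
  (upper (Hs k d I) d hd I (fun _ hw i => (hw i).1) (fun w hw h => by
    ext1 i
    by_cases hi : i ∈ I
    · exact h i hi
    · exact (hw i).2 hi)).1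

lemma lower {N : ℕ} (d : Fin N → ℤ) (hd : ∀ i, 0 ≤ d i) (I : Finset (Fin N)) :
    ∑ i ∈ I, (d i + 1) ≤ (Module.finrank k (Hs k d I) : ℤ) := by
  classical
  haveI := Hs_finite (k := k) d hd I
  let f : (∀ i : I, homogeneousSubmodule (Fin 2) k (d i.1).toNat) →ₗ[k] Hs k d I :=
    { toFun := fun u => ⟨fun i => if h : i ∈ I then (u ⟨i, h⟩).1 else 0, fun i => by
        by_cases h : i ∈ I
        · simp only [h, dif_pos, not_true, IsEmpty.forall_iff, and_true]
          exact Hm.of (u ⟨i, h⟩).2 (Int.toNat_of_nonneg (hd i)).symm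
        · simp only [h]
          exact ⟨Hm.zero _, fun _ => rfl⟩⟩
      map_add' := by
        intro u v
        apply Subtype.ext
        funext i
        by_cases h : i ∈ I <;> simp [h]
      map_smul' := by
        intro c v
        apply Subtype.ext
        funext i
        by_cases h : i ∈ I <;> simp [h] }
  have hf : Function.Injective f := by
    rw [← LinearMap.ker_eq_bot, LinearMap.ker_eq_bot']
    intro u hu
    funext i
    apply Subtype.ext
    have := congrFun (congrArg Subtype.val hu) i.1
    simpa [f] using this
  rw [← finrank_pi_hom (k := k) d hd]
  exact_mod_cast LinearMap.finrank_le_finrank_of_injective hf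

/-- fraction field -/
abbrev FF (k : Type) [Field k] := FractionRing (MvPolynomial (Fin 2) k)

/-- the matrix over the fraction field -/
abbrev mF {p q : ℕ} (φ : Matrix (Fin p) (Fin q) (MvPolynomial (Fin 2) k)) :
    (Fin q → FF k) →ₗ[FF k] (Fin p → FF k) :=
  (φ.map (algebraMap (MvPolynomial (Fin 2) k) (FF k))).mulVecLin

/-- coordinatewise inclusion -/
def cF {q : ℕ} (v : Fin q → MvPolynomial (Fin 2) k) : Fin q → FF k :=
  fun i => algebraMap (MvPolynomial (Fin 2) k) (FF k) (v i)

lemma cF_inj {q : ℕ} {v w : Fin q → MvPolynomial (Fin 2) k} (h : cF v = cF w) : v = w := by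
  funext i
  exact IsFractionRing.injective (MvPolynomial (Fin 2) k) (FF k) (congrFun h i)

lemma mF_cF {p q : ℕ} (φ : Matrix (Fin p) (Fin q) (MvPolynomial (Fin 2) k))
    (v : Fin q → MvPolynomial (Fin 2) k) : mF φ (cF v) = cF (φ.mulVec v) := by
  funext i
  exact (RingHom.map_mulVec (algebraMap (MvPolynomial (Fin 2) k) (FF k)) φ v i).symm

lemma mF_mul {p q r : ℕ} (φ : Matrix (Fin p) (Fin q) (MvPolynomial (Fin 2) k))
    (ψ : Matrix (Fin q) (Fin r) (MvPolynomial (Fin 2) k)) (v : Fin r → FF k) :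
    mF φ (mF ψ v) = mF (φ * ψ) v := by
  simp [Matrix.mulVec_mulVec, Matrix.map_mul]

lemma mF_smul_one {p : ℕ} (c : MvPolynomial (Fin 2) k) (v : Fin p → FF k) :
    mF (c • (1 : Matrix (Fin p) (Fin p) (MvPolynomial (Fin 2) k))) v =
      algebraMap (MvPolynomial (Fin 2) k) (FF k) c • v := by
  rw [Matrix.smul_one_eq_diagonal]
  funext i
  simp [Matrix.mulVec_diagonal]

lemma X_ne (t : Fin 2) (N : ℕ) :
    algebraMap (MvPolynomial (Fin 2) k) (FF k) (X t ^ N) ≠ 0 := by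
  intro h
  rw [← map_zero (algebraMap (MvPolynomial (Fin 2) k) (FF k))] at h
  exact pow_ne_zero N (X_ne_zero t) (IsFractionRing.injective (MvPolynomial (Fin 2) k) (FF k) h)

/-- the non-degree part of a realization -/
def Ex {m n : ℕ} (φ : Matrix (Fin n) (Fin (m + n)) (MvPolynomial (Fin 2) k))
    (ψ : Matrix (Fin (m + n)) (Fin m) (MvPolynomial (Fin 2) k)) : Prop :=
    φ * ψ = 0 ∧
    ∀ t : Fin 2, ∃ (N : ℕ) (σ : Matrix (Fin (m + n)) (Fin n) (MvPolynomial (Fin 2) k))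
      (ρ : Matrix (Fin m) (Fin (m + n)) (MvPolynomial (Fin 2) k)),
      φ * σ = (X t : MvPolynomial (Fin 2) k) ^ N • 1 ∧ ρ * ψ = (X t : MvPolynomial (Fin 2) k) ^ N • 1

variable {m n : ℕ} {φ : Matrix (Fin n) (Fin (m + n)) (MvPolynomial (Fin 2) k)}
  {ψ : Matrix (Fin (m + n)) (Fin m) (MvPolynomial (Fin 2) k)}

lemma Ex.surj (h : Ex φ ψ) : Function.Surjective (mF φ) := by
  obtain ⟨N, σ, ρ, h1, h2⟩ := h.2 0
  intro w
  refine ⟨mF σ ((algebraMap (MvPolynomial (Fin 2) k) (FF k) (X 0 ^ N))⁻¹ • w), ?_⟩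
  rw [mF_mul, h1, mF_smul_one, smul_smul, mul_inv_cancel₀ (X_ne 0 N), one_smul]

lemma Ex.inj (h : Ex φ ψ) : Function.Injective (mF ψ) := by
  obtain ⟨N, σ, ρ, h1, h2⟩ := h.2 0
  rw [← LinearMap.ker_eq_bot, LinearMap.ker_eq_bot']
  intro w hw
  have : mF ρ (mF ψ w) = 0 := by rw [hw, map_zero]
  rw [mF_mul, h2, mF_smul_one] at this
  exact (smul_eq_zero.1 this).resolve_left (X_ne 0 N)

lemma Ex.ker_rank (h : Ex φ ψ) : Module.finrank (FF k) (LinearMap.ker (mF φ)) = m := by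
  have := LinearMap.finrank_range_add_finrank_ker (mF φ)
  rw [LinearMap.range_eq_top.2 h.surj, finrank_top] at this
  simp at this
  omega

lemma Ex.range_eq (h : Ex φ ψ) : LinearMap.range (mF ψ) = LinearMap.ker (mF φ) := by
  apply Submodule.eq_of_le_of_finrank_eq
  · rintro _ ⟨w, rfl⟩
    rw [LinearMap.mem_ker, mF_mul, h.1]
    simp [Matrix.map_zero]
  · rw [h.ker_rank, LinearMap.finrank_range_of_inj h.inj]
    simp

lemma Ex.lift (h : Ex φ ψ) (b e : ℕ → ℤ) (hψ : ∀ i j, Hm (ψ i j) (e (i.1 + 1) - b (j.1 + 1)))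
    (c : ℤ) (v : Fin (m + n) → MvPolynomial (Fin 2) k) (hv : ∀ i, Hm (v i) (c + e (i.1 + 1)))
    (h0 : φ.mulVec v = 0) : ∃ w : Fin m → MvPolynomial (Fin 2) k,
      (∀ i, Hm (w i) (c + b (i.1 + 1))) ∧ ψ.mulVec w = v := by
  have hker : cF v ∈ LinearMap.ker (mF φ) := by
    rw [LinearMap.mem_ker, mF_cF, h0]
    funext i
    simp [cF]
  rw [← h.range_eq] at hker
  obtain ⟨w', hw'⟩ := hker
  obtain ⟨N0, -, ρ0, -, r0⟩ := h.2 0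
  obtain ⟨N1, -, ρ1, -, r1⟩ := h.2 1
  have e0 : ∀ i, algebraMap (MvPolynomial (Fin 2) k) (FF k) (ρ0.mulVec v i) =
      algebraMap (MvPolynomial (Fin 2) k) (FF k) (X 0 ^ N0) * w' i := by
    intro i
    have := congrFun (mF_cF ρ0 v) i
    rw [← hw', mF_mul, r0, mF_smul_one] at this
    exact this.symm
  have e1 : ∀ i, algebraMap (MvPolynomial (Fin 2) k) (FF k) (ρ1.mulVec v i) =
      algebraMap (MvPolynomial (Fin 2) k) (FF k) (X 1 ^ N1) * w' i := by
    intro i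
    have := congrFun (mF_cF ρ1 v) i
    rw [← hw', mF_mul, r1, mF_smul_one] at this
    exact this.symm
  have e2 : ∀ i, ∃ w, ρ0.mulVec v i = X 0 ^ N0 * w := by
    intro i
    have : X 1 ^ N1 * ρ0.mulVec v i = X 0 ^ N0 * ρ1.mulVec v i := by
      apply IsFractionRing.injective (MvPolynomial (Fin 2) k) (FF k)
      rw [map_mul, map_mul, e0, e1]; ring
    refine Prime.pow_dvd_of_dvd_mul_left X_prime N0 ?_ ⟨_, this⟩
    intro hd
    have := X_prime.dvd_of_dvd_pow hd
    rw [X_dvd_X] at this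
    exact absurd this (by decide)
  choose w hw using e2
  have hww : cF w = w' := by
    funext i
    have := e0 i
    rw [hw, map_mul] at this
    exact mul_left_cancel₀ (X_ne 0 N0) this
  have hψw : ψ.mulVec w = v := by
    apply cF_inj
    rw [← mF_cF, hww, hw']
  refine ⟨fun i => hcmp (c + b (i.1 + 1)) (w i), fun i => hcmp_hm _ _, ?_⟩
  funext l
  rw [← hcmp_self (hv l), ← hψw]
  simp only [Matrix.mulVec, dotProduct]
  rw [hcmp_sum]
  refine Finset.sum_congr rfl fun i _ => ?_
  exact (hcmp_mul (hψ l i) (w i) (by ring)).symm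

/-- degree inequality -/
lemma Ex.degIneq (h : Ex φ ψ) (b e a : ℕ → ℤ) (hb : Incr b m) (ha : Incr a n)
    (hφ : ∀ i j, Hm (φ i j) (a (i.1 + 1) - e (j.1 + 1)))
    (hψ : ∀ i j, Hm (ψ i j) (e (i.1 + 1) - b (j.1 + 1))) (j r s : ℕ) (hj : j ≤ m + n)
    (hr : Module.finrank (FF k) ((Vs (FF k) (m + n) j).map (mF φ)) = r)
    (hs : Module.finrank (FF k)
      (Vs (FF k) (m + n) j ⊓ LinearMap.ker (mF φ) : Submodule (FF k) _) = s)
    (hrs : r + s = m + n - j) :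
    degT e (m + n) - degT e j ≤ (degT a n - degT a (n - r)) + (degT b m - degT b (m - s)) := by
  have ext_card : ∀ (N q : ℕ) (W : Submodule (FF k) (Fin N → FF k)), Module.finrank (FF k) W = q →
      ∃ L : Finset (Fin N), L.card = q ∧ ∀ w ∈ W, (∀ i ∈ L, w i = 0) → w = 0 := by
    intro N q W hW
    obtain ⟨L, hL, hL2⟩ := coord_set q W hW.le
    have hq : q ≤ (Finset.univ : Finset (Fin N)).card := by
      have := W.finrank_le
      simp at this ⊢
      omega
    obtain ⟨L', h1, -, h3⟩ := Finset.exists_subsuperset_card_eq (Finset.subset_univ L) hL hq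
    exact ⟨L', h3, fun w hw h => hL2 w hw fun i hi => h i (h1 hi)⟩
  obtain ⟨I, hI, hI2⟩ := ext_card _ _ _ hr
  have hs' : Module.finrank (FF k) ((Vs (FF k) (m + n) j).comap (mF ψ)) = s := by
    rw [← hs, ← h.range_eq, inf_comm, ← Submodule.map_comap_eq]
    exact (LinearEquiv.finrank_eq (Submodule.equivMapOfInjective (mF ψ) h.inj _))
  obtain ⟨L, hL, hL2⟩ := ext_card _ _ _ hs'
  obtain ⟨c, hc1, hc2, hc3⟩ : ∃ c : ℤ, (∀ i : Fin (m + n), 0 ≤ c + e (i.1 + 1)) ∧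
      (∀ i : Fin n, 0 ≤ c + a (i.1 + 1)) ∧ (∀ i : Fin m, 0 ≤ c + b (i.1 + 1)) := by
    have hbd : ∀ (g : ℕ → ℤ) (N : ℕ), ∀ i : Fin N, 0 ≤ (∑ i : Fin N, |g (i.1 + 1)|) + g (i.1 + 1) := by
      intro g N i
      have h1 : |g (i.1 + 1)| ≤ ∑ i : Fin N, |g (i.1 + 1)| :=
        Finset.single_le_sum (f := fun i : Fin N => |g (i.1 + 1)|)
          (fun _ _ => abs_nonneg _) (Finset.mem_univ i)
      have := neg_abs_le (g (i.1 + 1))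
      omega
    have hnn : ∀ (g : ℕ → ℤ) (N : ℕ), 0 ≤ ∑ i : Fin N, |g (i.1 + 1)| :=
      fun g N => Finset.sum_nonneg fun _ _ => abs_nonneg _
    have x1 := hnn e (m + n)
    have x2 := hnn a n
    have x3 := hnn b m
    refine ⟨(∑ i : Fin (m + n), |e (i.1 + 1)|) + (∑ i : Fin n, |a (i.1 + 1)|) +
      ∑ i : Fin m, |b (i.1 + 1)|, fun i => ?_, fun i => ?_, fun i => ?_⟩
    · have := hbd e _ i; omega
    · have := hbd a _ i; omega
    · have := hbd b _ i; omega
  let J := Finset.univ.filter fun i : Fin (m + n) => j ≤ i.1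
  let D := Hs k (fun i : Fin (m + n) => c + e (i.1 + 1)) J
  haveI : Module.Finite k D := Hs_finite _ hc1 _
  have hlow := lower (k := k) (fun i : Fin (m + n) => c + e (i.1 + 1)) hc1 J
  let φL : (Fin (m + n) → MvPolynomial (Fin 2) k) →ₗ[k] (Fin n → MvPolynomial (Fin 2) k) :=
    φ.mulVecLin.restrictScalars k
  let ψL : (Fin m → MvPolynomial (Fin 2) k) →ₗ[k] (Fin (m + n) → MvPolynomial (Fin 2) k) :=
    ψ.mulVecLin.restrictScalars k
  have hDV : ∀ v ∈ D, cF v ∈ Vs (FF k) (m + n) j := by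
    intro v hv i hi
    have : v i = 0 := (hv i).2 (by simp [J]; omega)
    simp [cF, this]
  have hrn := finrank_map_ker φL D
  have hu1 := upper (D.map φL) (fun i => c + a (i.1 + 1)) hc2 I (by
    rintro _ ⟨v, hv, rfl⟩ i
    change Hm (∑ l, φ i l * v l) _
    exact Hm.sum _ _ fun l _ => (hφ i l).mul' (hv l).1 (by ring)) (by
    rintro _ ⟨v, hv, rfl⟩ h0
    apply cF_inj
    change cF (φ.mulVec v) = _
    have hz : cF (0 : Fin n → MvPolynomial (Fin 2) k) = 0 := by funext i; simp [cF]
    rw [hz]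
    refine hI2 _ ⟨cF v, hDV v hv, mF_cF φ v⟩ fun i hi => ?_
    have : φ.mulVec v i = 0 := h0 i hi
    simp [cF, this])
  let W : Submodule k (Fin m → MvPolynomial (Fin 2) k) :=
    Hs k (fun i : Fin m => c + b (i.1 + 1)) Finset.univ ⊓ D.comap ψL
  have hu2 := upper W (fun i => c + b (i.1 + 1)) hc3 L (fun w hw i => (hw.1 i).1) (by
    intro w hw h0
    apply cF_inj
    have hz : cF (0 : Fin m → MvPolynomial (Fin 2) k) = 0 := by funext i; simp [cF]
    rw [hz]
    refine hL2 _ ?_ fun i hi => by simp [cF, h0 i hi]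
    rw [Submodule.mem_comap, mF_cF]
    exact hDV _ hw.2)
  haveI := hu2.1
  have hker : D ⊓ LinearMap.ker φL ≤ W.map ψL := by
    rintro v ⟨hv1, hv2⟩
    obtain ⟨w, w1, w2⟩ := h.lift b e hψ c v (fun i => (hv1 i).1) hv2
    refine ⟨w, ⟨fun i => ⟨w1 i, fun hn => absurd (Finset.mem_univ i) hn⟩, ?_⟩, w2⟩
    change ψ.mulVec w ∈ D
    rw [w2]; exact hv1
  have hk1 := Submodule.finrank_mono hker
  have hk2 := Submodule.finrank_map_le ψL W
  have s1 := hu1.2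
  have s2 := hu2.2
  have t1 := top_sum_fin a n ha I
  have t2 := top_sum_fin b m hb L
  have t3 := tail_sum e (m + n) j hj
  have hJ : J.card = m + n - j := card_ge _ _
  have cnt : ∀ (N : ℕ) (g : ℕ → ℤ) (S : Finset (Fin N)),
      ∑ i ∈ S, (c + g (i.1 + 1) + 1) = S.card * (c + 1) + ∑ i ∈ S, g (i.1 + 1) := by
    intro N g S
    rw [← nsmul_eq_mul, ← Finset.sum_const, ← Finset.sum_add_distrib]
    exact Finset.sum_congr rfl fun _ _ => by ring
  rw [cnt] at s1 s2 hlow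
  rw [hI] at s1 t1
  rw [hL] at s2 t2
  rw [hJ, ← hrs] at hlow
  have t3' : ∑ i ∈ J, e (i.1 + 1) = degT e (m + n) - degT e j := t3
  rw [t3'] at hlow
  push_cast at hlow
  have hD : (Module.finrank k D : ℤ) ≤ (Module.finrank k (D.map φL) : ℤ) + Module.finrank k W := by
    have : Module.finrank k D ≤ Module.finrank k (D.map φL) + Module.finrank k W := by omega
    exact_mod_cast this
  have hlow' := hlow.trans hD
  nlinarith

lemma nec (b e a : ℕ → ℤ) (m n : ℕ) (hb : Incr b m) (he : Incr e (m + n)) (ha : Incr a n)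
    (hdeg : degT a n + degT b m = degT e (m + n)) (h : GReal k b e a m n) : Crit2 b e a m n := by
  obtain ⟨φ, ψ, hφ, hψ, h3, h4⟩ := h
  have hE : Ex φ ψ := ⟨h3, h4⟩
  set g : ℕ → ℕ := fun j => Module.finrank (FF k)
    (Vs (FF k) (m + n) j ⊓ LinearMap.ker (mF φ) : Submodule (FF k) _) with hg
  have g1 : ∀ j, Module.finrank (FF k) ((Vs (FF k) (m + n) j).map (mF φ)) + g j = m + n - j := by
    intro j
    rw [← finrank_Vs (FF k) (m + n) j]
    exact finrank_map_ker _ _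
  have g2 : ∀ j, g j ≤ g (j + 1) + 1 := by
    intro j
    by_cases hj : j < m + n
    · let P := (Vs (FF k) (m + n) j ⊓ LinearMap.ker (mF φ) : Submodule (FF k) _)
      have h1 := finrank_map_ker (LinearMap.proj (⟨j, hj⟩ : Fin (m + n)) :
        (Fin (m + n) → FF k) →ₗ[FF k] FF k) P
      have h2 : P ⊓ LinearMap.ker (LinearMap.proj (⟨j, hj⟩ : Fin (m + n)) :
        (Fin (m + n) → FF k) →ₗ[FF k] FF k) ≤ Vs (FF k) (m + n) (j + 1) ⊓ LinearMap.ker (mF φ) := by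
        rintro v ⟨⟨v1, v2⟩, v3⟩
        refine ⟨fun i hi => ?_, v2⟩
        rcases Nat.lt_succ_iff_lt_or_eq.1 hi with h | h
        · exact v1 i h
        · have : i = ⟨j, hj⟩ := Fin.ext h
          rw [this]; exact v3
      have h3 := Submodule.finrank_mono h2
      have h4 := Submodule.finrank_le (P.map (LinearMap.proj (⟨j, hj⟩ : Fin (m + n)) :
        (Fin (m + n) → FF k) →ₗ[FF k] FF k))
      rw [Module.finrank_self] at h4
      change Module.finrank (FF k) P ≤ Module.finrank (FF k) _ + 1
      omega
    · have := g1 j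
      omega
  have g3 : ∀ j, g j ≤ m := by
    intro j
    have := Submodule.finrank_mono (inf_le_right :
      (Vs (FF k) (m + n) j ⊓ LinearMap.ker (mF φ) : Submodule (FF k) _) ≤ _)
    rw [hE.ker_rank] at this
    exact this
  have g4 : ∀ j ν, 1 ≤ ν → ν ≤ n → j < m + n → a ν < e (j + 1) → m + n - j ≤ (n - ν) + g j := by
    intro j ν hν hνn hj hlt
    have hle : (Vs (FF k) (m + n) j).map (mF φ) ≤ Vs (FF k) n ν := by
      rintro _ ⟨v, hv, rfl⟩ i hi
      change ∑ l, algebraMap _ (FF k) (φ i l) * v l = 0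
      refine Finset.sum_eq_zero fun l _ => ?_
      rcases lt_or_ge l.1 j with hl | hl
      · rw [hv l hl, mul_zero]
      · have x1 := ha (i.1 + 1) ν (by omega) (by omega) hνn
        have x2 := he (j + 1) (l.1 + 1) (by omega) (by omega) (by omega)
        rw [(hφ i l).2 (by omega), map_zero, zero_mul]
    have := Submodule.finrank_mono hle
    rw [finrank_Vs] at this
    have := g1 j
    omega
  have g5 : ∀ j i, 1 ≤ j → j ≤ m + n → i < m → e j < b (i + 1) → m - i ≤ g j := by
    intro j i hj hjn hi hlt
    have hle : (Vs (FF k) m i).map (mF ψ) ≤ Vs (FF k) (m + n) j ⊓ LinearMap.ker (mF φ) := by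
      rintro _ ⟨v, hv, rfl⟩
      refine ⟨fun l hl => ?_, ?_⟩
      · change ∑ p, algebraMap _ (FF k) (ψ l p) * v p = 0
        refine Finset.sum_eq_zero fun p _ => ?_
        rcases lt_or_ge p.1 i with hp | hp
        · rw [hv p hp, mul_zero]
        · have x1 := he (l.1 + 1) j (by omega) (by omega) hjn
          have x2 := hb (i + 1) (p.1 + 1) (by omega) (by omega) (by omega)
          rw [(hψ l p).2 (by omega), map_zero, zero_mul]
      · rw [← hE.range_eq]
        exact ⟨v, rfl⟩
    have h1 := Submodule.finrank_mono hle
    have h2 := LinearEquiv.finrank_eq (Submodule.equivMapOfInjective (mF ψ) hE.inj (Vs (FF k) m i))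
    rw [finrank_Vs] at h2
    change m - i ≤ Module.finrank (FF k) _
    omega
  refine ⟨hdeg, fun i hi hin => ?_, fun i hi him => ?_, fun μ ν hμ hν hνn hbad => ?_⟩
  · by_contra hcon
    have := g4 (i - 1) i hi hin (by omega) (by rw [show i - 1 + 1 = i by omega]; omega)
    have := g3 (i - 1)
    omega
  · by_contra hcon
    have := g5 (n + i) (i - 1) (by omega) (by omega) (by omega)
      (by rw [show i - 1 + 1 = i by omega]; omega)
    have := g1 (n + i)
    omega
  · have hk : m - μ ≤ g (μ + ν) := by
      rcases hbad with hlt | hlt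
      · have := g4 (μ + ν) ν hν hνn (by omega) (by rwa [show μ + ν + 1 = μ + 1 + ν by ring])
        omega
      · exact g5 (μ + ν) μ (by omega) (by omega) hμ hlt
    have hend := g1 (μ + ν + (m + n - (μ + ν)))
    obtain ⟨j, j1, j2, j3⟩ := disc_ivt g g2 (m - μ) (m + n - (μ + ν)) (μ + ν) hk (by omega)
    have hj := g1 j
    obtain ⟨ν', rfl⟩ := Nat.exists_eq_add_of_le (show μ ≤ j by omega)
    refine ⟨ν', by omega, by omega, ?_⟩
    have := hE.degIneq b e a hb ha hφ hψ (μ + ν') (n - ν') (m - μ) (by omega) (by omega) j3 (by omega)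
    rw [show n - (n - ν') = ν' by omega, show m - (m - μ) = μ by omega] at this
    unfold Tf
    omega

end Nec2

/-- Theorem: `(b,e,a)` admits a matrix realization over `k[x,y]` iff it
satisfies the realizability criterion. -/
theorem stmt2 (k : Type) [Field k] (m n : ℕ) (hm : 1 ≤ m) (hn : 1 ≤ n)
    (b e a : ℕ → ℤ) (hb : Incr b m) (he : Incr e (m + n)) (ha : Incr a n)
    (hdeg : degT a n + degT b m = degT e (m + n)) :
    MatReal k b e a m n ↔ RealizCrit b e a m n := by
  rw [greal_iff, crit_iff b e a m n]
  exact ⟨nec b e a m n hb he ha hdeg, suff b m hb n e a he ha⟩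

end
end

section
/- Let (b,e,a) be splitting types of ranks m, m+n, n with deg a + deg b = deg e, and let M ≥ 1 be an integer. Let b^{(M)}, e^{(M)}, a^{(M)} denote the splitting types of ranks Mm, M(m+n), Mn obtained by repeating each entry of b, e, a respectively M times (keeping weakly increasing order). If the triple (b^{(M)}, e^{(M)}, a^{(M)}) admits a balancing datum, then (b,e,a) admits a balancing datum. (This is the combinatorial content of the paper's corollary that in projective dimension 2 every integral lattice point of the Boij–Söderberg cone is the Betti diagram of a genuine graded module.) -/
open Finset

/-- `(σ, τ, Γ)` is a balancing datum for the triple `(b,e,a)` of ranks `m, m+n, n`. -/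
def IsBalDatum (b e a : ℕ → ℤ) (m n : ℕ) (σ τ : ℕ → ℕ) (Γ : ℕ → ℕ → ℕ) : Prop :=
  (∀ j ∈ Icc 1 n, σ j ∈ Icc 1 (m + n)) ∧
  (∀ i ∈ Icc 1 m, τ i ∈ Icc 1 (m + n)) ∧
  Set.InjOn σ ↑(Icc 1 n) ∧
  Set.InjOn τ ↑(Icc 1 m) ∧
  (∀ i ∈ Icc 1 m, ∀ j ∈ Icc 1 n, τ i ≠ σ j) ∧
  (∀ x ∈ Icc 1 (m + n), (∃ j ∈ Icc 1 n, σ j = x) ∨ (∃ i ∈ Icc 1 m, τ i = x)) ∧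
  (∀ i ∈ Icc 1 m, ∀ j ∈ Icc 1 n, Γ i j ≠ 0 →
    b i < e (τ i) ∧ e (τ i) ≤ e (σ j) ∧ e (σ j) < a j ∧
    (Γ i j : ℤ) ≤ e (τ i) - b i ∧ (Γ i j : ℤ) ≤ a j - e (σ j)) ∧
  (∀ i ∈ Icc 1 m, (∑ j ∈ Icc 1 n, (Γ i j : ℤ)) = e (τ i) - b i) ∧
  (∀ j ∈ Icc 1 n, (∑ i ∈ Icc 1 m, (Γ i j : ℤ)) = a j - e (σ j))

/-- The triple `(b,e,a)` admits a balancing datum. -/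
def HasBalDatum (b e a : ℕ → ℤ) (m n : ℕ) : Prop :=
  ∃ σ τ Γ, IsBalDatum b e a m n σ τ Γ

/-- The tuple obtained by repeating each entry of `u` exactly `M` times
(1-based indexing). -/
def repT (u : ℕ → ℤ) (M : ℕ) : ℕ → ℤ := fun i => u ((i - 1) / M + 1)

lemma tele_sum (c : ℕ → ℤ) (n : ℕ) :
    ∑ j ∈ Icc 1 n, (c j - c (j - 1)) = c n - c 0 := by
  induction n with
  | zero => simp
  | succ k ih =>
    rw [Finset.sum_Icc_succ_top (by omega), ih]
    simp

/-- Existence of the north-west-corner transport plan. -/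
lemma transport_exists (m n : ℕ) (U V : ℕ → ℤ) (hU0 : U 0 = 0) (hV0 : V 0 = 0)
    (hU : ∀ i j, i ≤ j → j ≤ m → U i ≤ U j) (hV : ∀ i j, i ≤ j → j ≤ n → V i ≤ V j)
    (hUV : U m = V n) :
    ∃ Γ : ℕ → ℕ → ℕ,
      (∀ i ∈ Icc 1 m, ∀ j ∈ Icc 1 n, Γ i j ≠ 0 → U (i - 1) < V j ∧ V (j - 1) < U i ∧
        U (i - 1) < U i ∧ V (j - 1) < V j ∧
        (Γ i j : ℤ) ≤ U i - U (i - 1) ∧ (Γ i j : ℤ) ≤ V j - V (j - 1)) ∧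
      (∀ i ∈ Icc 1 m, (∑ j ∈ Icc 1 n, (Γ i j : ℤ)) = U i - U (i - 1)) ∧
      (∀ j ∈ Icc 1 n, (∑ i ∈ Icc 1 m, (Γ i j : ℤ)) = V j - V (j - 1)) := by
  refine ⟨fun i j => (min (U i) (V j) - max (U (i - 1)) (V (j - 1))).toNat, ?_, ?_, ?_⟩
  · intro i hi j hj h
    rw [mem_Icc] at hi hj
    have h1 := hU (i - 1) i (by omega) hi.2
    have h2 := hV (j - 1) j (by omega) hj.2
    dsimp only at h ⊢
    omega
  · intro i hi
    rw [mem_Icc] at hi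
    have h1 := hU (i - 1) i (by omega) hi.2
    have h3 := hU i m hi.2 le_rfl
    have h4 := hU 0 (i - 1) (by omega) (by omega)
    have := tele_sum (fun j => max (U (i - 1)) (min (U i) (V j))) n
    rw [Finset.sum_congr rfl (g := fun j => max (U (i - 1)) (min (U i) (V j)) -
      max (U (i - 1)) (min (U i) (V (j - 1))))]
    · rw [this]; omega
    · intro j hj
      rw [mem_Icc] at hj
      have h2 := hV (j - 1) j (by omega) hj.2
      dsimp only
      omega
  · intro j hj
    rw [mem_Icc] at hj
    have h1 := hV (j - 1) j (by omega) hj.2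
    have h3 := hV j n hj.2 le_rfl
    have h4 := hV 0 (j - 1) (by omega) (by omega)
    have := tele_sum (fun i => max (V (j - 1)) (min (V j) (U i))) m
    rw [Finset.sum_congr rfl (g := fun i => max (V (j - 1)) (min (V j) (U i)) -
      max (V (j - 1)) (min (V j) (U (i - 1))))]
    · rw [this]; omega
    · intro i hi
      rw [mem_Icc] at hi
      have h2 := hU (i - 1) i (by omega) hi.2
      dsimp only
      omega

lemma psum_mono (f : ℕ → ℤ) (m : ℕ) (hf : ∀ i ∈ Icc 1 m, 0 ≤ f i) (i j : ℕ) (hij : i ≤ j)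
    (hj : j ≤ m) : ∑ k ∈ Icc 1 i, f k ≤ ∑ k ∈ Icc 1 j, f k := by
  apply Finset.sum_le_sum_of_subset_of_nonneg
  · exact Finset.Icc_subset_Icc le_rfl hij
  · intro k hk _
    rw [mem_Icc] at hk
    exact hf k (by rw [mem_Icc]; omega)

lemma psum_diff (f : ℕ → ℤ) (i : ℕ) (hi : 1 ≤ i) :
    ∑ k ∈ Icc 1 i, f k - ∑ k ∈ Icc 1 (i - 1), f k = f i := by
  obtain ⟨k, rfl⟩ : ∃ k, i = k + 1 := ⟨i - 1, by omega⟩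
  rw [Finset.sum_Icc_succ_top (by omega)]
  simp

/-- Sufficiency: a monotone lattice path yields a balancing datum. -/
lemma path_datum (m n : ℕ) (b e a : ℕ → ℤ) (he : Incr e (m + n))
    (hdeg : degT a n + degT b m = degT e (m + n))
    (R : ℕ → ℕ) (hRm : ∀ q ∈ Icc 1 n, R q ≤ m)
    (hR : ∀ q q', 1 ≤ q → q ≤ q' → q' ≤ n → R q ≤ R q')
    (hA : ∀ q ∈ Icc 1 n, e (q + R q) ≤ a q)
    (hB : ∀ q ∈ Icc 1 n, ∀ p, 1 ≤ p → p ≤ R q → b p ≤ e (p + q - 1))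
    (hB' : ∀ p ∈ Icc 1 m, b p ≤ e (p + n))
    (hD : ∀ q ∈ Icc 1 n, ∑ j ∈ Icc 1 q, a j + ∑ i ∈ Icc 1 (R q), b i
      ≤ ∑ k ∈ Icc 1 (q + R q), e k) :
    HasBalDatum b e a m n := by
  set N : ℕ → ℕ := fun p => #{q ∈ Icc 1 n | R q < p} with hN
  set σ : ℕ → ℕ := fun q => q + R q with hσ
  set τ : ℕ → ℕ := fun p => p + N p with hτ
  have hNn : ∀ p, N p ≤ n := fun p => by
    have := Finset.card_filter_le (Icc 1 n) (fun q => R q < p)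
    simpa using this
  have hN1 : ∀ q ∈ Icc 1 n, ∀ p, R q < p → q ≤ N p := by
    intro q hq p hp
    have : Icc 1 q ⊆ {q ∈ Icc 1 n | R q < p} := by
      intro x hx
      rw [mem_Icc] at hx hq
      rw [mem_filter, mem_Icc]
      exact ⟨⟨by omega, by omega⟩, lt_of_le_of_lt (hR x q hx.1 hx.2 hq.2) hp⟩
    have := Finset.card_le_card this
    simpa using this
  have hN2 : ∀ q ∈ Icc 1 n, ∀ p, p ≤ R q → N p < q := by
    intro q hq p hp
    have : ({q ∈ Icc 1 n | R q < p} : Finset ℕ) ⊆ Icc 1 (q - 1) := by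
      intro x hx
      rw [mem_filter, mem_Icc] at hx
      rw [mem_Icc] at hq ⊢
      by_contra hcon
      have := hR q x hq.1 (by omega) hx.1.2
      omega
    have := Finset.card_le_card this
    rw [mem_Icc] at hq
    simp at this
    change N p ≤ q - 1 at this
    omega
  have hNmono : ∀ p p', p ≤ p' → N p ≤ N p' := by
    intro p p' hpp
    apply Finset.card_le_card
    intro x hx
    rw [mem_filter] at hx ⊢
    exact ⟨hx.1, by omega⟩
  have hσinj : Set.InjOn σ ↑(Icc 1 n) := by
    intro x hx y hy hxy
    simp only [coe_Icc, Set.mem_Icc] at hx hy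
    simp only [hσ] at hxy
    rcases le_total x y with h | h
    · have := hR x y hx.1 h hy.2; omega
    · have := hR y x hy.1 h hx.2; omega
  have hτinj : Set.InjOn τ ↑(Icc 1 m) := by
    intro x hx y hy hxy
    simp only [hτ] at hxy
    rcases le_total x y with h | h
    · have := hNmono x y h; omega
    · have := hNmono y x h; omega
  have hlt : ∀ q ∈ Icc 1 n, ∀ p, p ≤ R q → τ p < σ q := by
    intro q hq p hp
    have := hN2 q hq p hp
    simp only [hσ, hτ]; omega
  have hdisj : ∀ i ∈ Icc 1 m, ∀ j ∈ Icc 1 n, τ i ≠ σ j := by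
    intro i hi j hj
    rcases lt_or_ge (R j) i with h | h
    · have := hN1 j hj i h
      simp only [hσ, hτ]; omega
    · exact (hlt j hj i h).ne
  have hcov : ∀ q p, q ≤ n → p ≤ m → (∀ j ∈ Icc 1 q, σ j ≤ p + q) → (∀ i ∈ Icc 1 p, τ i ≤ p + q) →
      (Icc 1 q).image σ ∪ (Icc 1 p).image τ = Icc 1 (p + q) := by
    intro q p hq hp h1 h2
    apply Finset.eq_of_subset_of_card_le
    · intro x hx
      rw [mem_union, mem_image, mem_image] at hx
      rcases hx with ⟨j, hj, rfl⟩ | ⟨i, hi, rfl⟩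
      · have := h1 j hj
        rw [mem_Icc] at hj ⊢
        simp only [hσ] at this ⊢; omega
      · have := h2 i hi
        rw [mem_Icc] at hi ⊢
        simp only [hτ] at this ⊢; omega
    · rw [Finset.card_union_of_disjoint, Finset.card_image_of_injOn, Finset.card_image_of_injOn]
      · simp; omega
      · exact hτinj.mono (by
          intro x hx; simp only [coe_Icc, Set.mem_Icc] at hx ⊢; omega)
      · exact hσinj.mono (by
          intro x hx; simp only [coe_Icc, Set.mem_Icc] at hx ⊢; omega)
      · rw [Finset.disjoint_left]
        intro x hx hx'
        rw [mem_image] at hx hx'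
        obtain ⟨j, hj, rfl⟩ := hx
        obtain ⟨i, hi, hh⟩ := hx'
        rw [mem_Icc] at hi hj
        exact hdisj i (by rw [mem_Icc]; omega) j (by rw [mem_Icc]; omega) hh
  have hsum : ∀ q p, q ≤ n → p ≤ m → (∀ j ∈ Icc 1 q, σ j ≤ p + q) → (∀ i ∈ Icc 1 p, τ i ≤ p + q) →
      ∑ j ∈ Icc 1 q, e (σ j) + ∑ i ∈ Icc 1 p, e (τ i) = ∑ k ∈ Icc 1 (p + q), e k := by
    intro q p hq hp h1 h2
    rw [← hcov q p hq hp h1 h2, Finset.sum_union, Finset.sum_image, Finset.sum_image]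
    · exact hτinj.mono (by
        intro x hx; simp only [coe_Icc, Set.mem_Icc] at hx ⊢; omega)
    · exact hσinj.mono (by
        intro x hx; simp only [coe_Icc, Set.mem_Icc] at hx ⊢; omega)
    · rw [Finset.disjoint_left]
      intro x hx hx'
      rw [mem_image] at hx hx'
      obtain ⟨j, hj, rfl⟩ := hx
      obtain ⟨i, hi, hh⟩ := hx'
      rw [mem_Icc] at hi hj
      exact hdisj i (by rw [mem_Icc]; omega) j (by rw [mem_Icc]; omega) hh
  have hσr : ∀ j ∈ Icc 1 n, σ j ∈ Icc 1 (m + n) := by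
    intro j hj
    have := hRm j hj
    rw [mem_Icc] at hj ⊢
    simp only [hσ]; omega
  have hτr : ∀ i ∈ Icc 1 m, τ i ∈ Icc 1 (m + n) := by
    intro i hi
    have := hNn i
    rw [mem_Icc] at hi ⊢
    simp only [hτ]; omega
  have hbτ : ∀ i ∈ Icc 1 m, 0 ≤ e (τ i) - b i := by
    intro i hi
    rcases eq_or_lt_of_le (hNn i) with h | h
    · have := hB' i hi
      simp only [hτ, h]; omega
    · have hq : N i + 1 ∈ Icc 1 n := by rw [mem_Icc]; omega
      have h2 : i ≤ R (N i + 1) := by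
        by_contra hcon
        have := hN1 _ hq i (by omega)
        omega
      have := hB _ hq i (mem_Icc.1 hi).1 h2
      rw [show i + (N i + 1) - 1 = i + N i by omega] at this
      simp only [hτ]; omega
  have haσ : ∀ j ∈ Icc 1 n, 0 ≤ a j - e (σ j) := by
    intro j hj
    have := hA j hj
    simp only [hσ]; omega
  obtain ⟨Γ, hΓ1, hΓ2, hΓ3⟩ := transport_exists m n
    (fun p => ∑ i ∈ Icc 1 p, (e (τ i) - b i)) (fun q => ∑ j ∈ Icc 1 q, (a j - e (σ j)))
    (by simp) (by simp) (psum_mono _ m hbτ) (psum_mono _ n haσ) (by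
      have := hsum n m le_rfl le_rfl (fun j hj => (mem_Icc.1 (hσr j hj)).2)
        (fun i hi => (mem_Icc.1 (hτr i hi)).2)
      simp only [Finset.sum_sub_distrib]
      simp only [degT] at hdeg
      linarith)
  refine ⟨σ, τ, Γ, hσr, hτr, hσinj, hτinj, hdisj, ?_, ?_, ?_, ?_⟩
  · intro x hx
    rw [← hcov n m le_rfl le_rfl (fun j hj => (mem_Icc.1 (hσr j hj)).2)
        (fun i hi => (mem_Icc.1 (hτr i hi)).2), mem_union, mem_image, mem_image] at hx
    exact hx
  · intro i hi j hj hne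
    obtain ⟨h1, h2, h3, h4, h5, h6⟩ := hΓ1 i hi j hj hne
    have hi' := mem_Icc.1 hi
    have hj' := mem_Icc.1 hj
    have d1 := psum_diff (fun i => e (τ i) - b i) i hi'.1
    have d2 := psum_diff (fun j => a j - e (σ j)) j hj'.1
    have hiR : i ≤ R j := by
      by_contra hcon
      have k1 := psum_mono _ m hbτ (R j) (i - 1) (by omega) (by omega)
      have k2 := hsum j (R j) hj'.2 (hRm j hj) (by
        intro x hx
        rw [mem_Icc] at hx
        have := hR x j hx.1 hx.2 hj'.2
        simp only [hσ]; omega) (by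
        intro x hx
        have := hlt j hj x (mem_Icc.1 hx).2
        simp only [hσ] at this; omega)
      have k3 := hD j hj
      rw [add_comm j (R j)] at k3
      simp only [Finset.sum_sub_distrib] at *
      linarith
    refine ⟨by linarith, ?_, by linarith, by linarith, by linarith⟩
    exact he _ _ (mem_Icc.1 (hτr i hi)).1 (hlt j hj i hiR).le (mem_Icc.1 (hσr j hj)).2
  · intro i hi
    rw [hΓ2 i hi]
    exact psum_diff (fun i => e (τ i) - b i) i (mem_Icc.1 hi).1
  · intro j hj
    rw [hΓ3 j hj]
    exact psum_diff (fun j => a j - e (σ j)) j (mem_Icc.1 hj).1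

/-- A lowest set minimises the sum among sets of equal size. -/
lemma low_sum (f : ℕ → ℤ) (U K T : Finset ℕ) (v : ℤ) (hK : K ⊆ U) (hT : T ⊆ U)
    (h1 : ∀ k ∈ K, f k ≤ v) (h2 : ∀ k ∈ U, k ∉ K → v ≤ f k) (hc : #T = #K) :
    ∑ k ∈ K, f k ≤ ∑ k ∈ T, f k := by
  have e1 : ∑ k ∈ K, (f k - v) = ∑ k ∈ K, min (f k - v) 0 :=
    Finset.sum_congr rfl fun k hk => by have := h1 k hk; omega
  have e2 : ∑ k ∈ K, min (f k - v) 0 = ∑ k ∈ U, min (f k - v) 0 :=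
    Finset.sum_subset hK fun k hk hk' => by have := h2 k hk hk'; omega
  have e3 : ∑ k ∈ U, min (f k - v) 0 ≤ ∑ k ∈ T, min (f k - v) 0 := by
    rw [← Finset.sum_sdiff hT]
    have : ∑ k ∈ U \ T, min (f k - v) 0 ≤ 0 := Finset.sum_nonpos fun k _ => min_le_right _ _
    linarith
  have e4 : ∑ k ∈ T, min (f k - v) 0 ≤ ∑ k ∈ T, (f k - v) :=
    Finset.sum_le_sum fun k _ => min_le_left _ _
  have : ∑ k ∈ K, (f k - v) ≤ ∑ k ∈ T, (f k - v) := by rw [e1, e2]; exact e3.trans e4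
  simp only [Finset.sum_sub_distrib, Finset.sum_const, hc] at this
  linarith

/-- The initial segment minimises the sum of an increasing function. -/
lemma init_sum (f : ℕ → ℤ) (N t : ℕ) (hf : Incr f N) (J : Finset ℕ) (hJ : J ⊆ Icc 1 N)
    (hc : #J = t) : ∑ k ∈ Icc 1 t, f k ≤ ∑ k ∈ J, f k := by
  have htN : t ≤ N := by
    have := Finset.card_le_card hJ
    simp at this; omega
  rcases Nat.eq_zero_or_pos t with h0 | h0
  · subst h0
    rw [Finset.card_eq_zero] at hc
    simp [hc]
  · apply low_sum f (Icc 1 N) _ _ (f t) (Finset.Icc_subset_Icc le_rfl htN) hJ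
    · intro k hk
      rw [mem_Icc] at hk
      exact hf k t hk.1 hk.2 htN
    · intro k hk hk'
      rw [mem_Icc] at hk hk'
      exact hf t k h0 (by omega) hk.2
    · simpa using hc

/-- Counting function. -/
def cnt (f : ℕ → ℤ) (N : ℕ) (v : ℤ) : ℕ := #{k ∈ Icc 1 N | f k ≤ v}

lemma cnt_mono (f : ℕ → ℤ) (N : ℕ) {v w : ℤ} (h : v ≤ w) : cnt f N v ≤ cnt f N w := by
  apply Finset.card_le_card
  intro x hx
  rw [mem_filter] at hx ⊢
  exact ⟨hx.1, hx.2.trans h⟩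

lemma cnt_le (f : ℕ → ℤ) (N : ℕ) (v : ℤ) : cnt f N v ≤ N := by
  have := Finset.card_filter_le (Icc 1 N) (fun q => f q ≤ v)
  simpa [cnt] using this

lemma cnt_le_cnt (f g : ℕ → ℤ) (N : ℕ) (v : ℤ) (h : ∀ k ∈ Icc 1 N, f k ≤ g k) :
    cnt g N v ≤ cnt f N v := by
  apply Finset.card_le_card
  intro x hx
  rw [mem_filter] at hx ⊢
  exact ⟨hx.1, (h x hx.1).trans hx.2⟩

lemma cnt_sorted (f : ℕ → ℤ) (N : ℕ) (hf : Incr f N) (v : ℤ) (k : ℕ) (h1 : 1 ≤ k) (h2 : k ≤ N) :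
    f k ≤ v ↔ k ≤ cnt f N v := by
  constructor
  · intro h
    have : Icc 1 k ⊆ {k ∈ Icc 1 N | f k ≤ v} := by
      intro x hx
      rw [mem_Icc] at hx
      rw [mem_filter, mem_Icc]
      exact ⟨⟨hx.1, by omega⟩, (hf x k hx.1 hx.2 h2).trans h⟩
    have := Finset.card_le_card this
    simpa [cnt] using this
  · intro h
    by_contra hcon
    have : ({k ∈ Icc 1 N | f k ≤ v} : Finset ℕ) ⊆ Icc 1 (k - 1) := by
      intro x hx
      rw [mem_filter, mem_Icc] at hx
      rw [mem_Icc]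
      by_contra hc
      have := hf k x h1 (by omega) hx.1.2
      omega
    have := Finset.card_le_card this
    simp at this
    change cnt f N v ≤ k - 1 at this
    omega

/-- The `t`-th smallest value. -/
lemma cnt_sel (f : ℕ → ℤ) (N t : ℕ) (h1 : 1 ≤ t) (h2 : t ≤ N) :
    ∃ v : ℤ, t ≤ cnt f N v ∧ cnt f N (v - 1) < t := by
  obtain ⟨lo, hlo⟩ : ∃ lo, ∀ k ∈ Icc 1 N, lo ≤ f k := by
    obtain ⟨lo, hlo⟩ := ((Icc 1 N).image f).bddBelow
    exact ⟨lo, fun k hk => hlo (by simpa using ⟨k, by simpa using hk, rfl⟩)⟩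
  obtain ⟨hi, hhi⟩ : ∃ hi, ∀ k ∈ Icc 1 N, f k ≤ hi := by
    obtain ⟨lo, hlo⟩ := ((Icc 1 N).image f).bddAbove
    exact ⟨lo, fun k hk => hlo (by simpa using ⟨k, by simpa using hk, rfl⟩)⟩
  obtain ⟨v, hv, hv'⟩ := Int.exists_least_of_bdd (P := fun v => t ≤ cnt f N v)
    ⟨lo, fun z hz => by
      by_contra hcon
      have : cnt f N z = 0 := by
        rw [cnt, Finset.card_eq_zero, Finset.filter_eq_empty_iff]
        intro k hk
        have := hlo k hk
        omega
      omega⟩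
    ⟨hi, by
      have : cnt f N hi = N := by
        rw [cnt, Finset.filter_true_of_mem hhi]; simp
      omega⟩
  refine ⟨v, hv, ?_⟩
  by_contra hcon
  have := hv' (v - 1) (by omega)
  omega

lemma repT_incr (u : ℕ → ℤ) (M N : ℕ) (hM : 1 ≤ M) (hu : Incr u N) :
    Incr (repT u M) (M * N) := by
  intro i j hi hij hj
  apply hu
  · exact Nat.succ_le_succ (Nat.zero_le _)
  · have := Nat.div_le_div_right (c := M) (show i - 1 ≤ j - 1 by omega); omega
  · have : (j - 1) / M < N := by
      rw [Nat.div_lt_iff_lt_mul (by omega), mul_comm]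
      have : 1 ≤ M * N := by omega
      omega
    omega

lemma repT_val (u : ℕ → ℤ) (M r k : ℕ) (hr : 1 ≤ r) (h1 : M * (r - 1) < k)
    (h2 : k ≤ M * r) : repT u M k = u r := by
  obtain ⟨s, rfl⟩ : ∃ s, r = s + 1 := ⟨r - 1, by omega⟩
  simp only [Nat.add_sub_cancel] at h1
  rw [repT]
  congr 1
  congr 1
  rw [mul_add] at h2
  have : k - 1 = M * s + (k - 1 - M * s) := by omega
  rw [this, Nat.mul_add_div (by
    rcases Nat.eq_zero_or_pos M with h | h
    · subst h; omega
    · exact h), Nat.div_eq_of_lt (by omega)]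
  simp

lemma repT_sum (u : ℕ → ℤ) (M k : ℕ) :
    ∑ i ∈ Icc 1 (M * k), repT u M i = M * ∑ i ∈ Icc 1 k, u i := by
  induction k with
  | zero => simp
  | succ k ih =>
    rw [Finset.sum_Icc_succ_top (by omega), mul_add (M : ℤ), ← ih]
    have : Icc 1 (M * (k + 1)) = Icc 1 (M * k) ∪ Icc (M * k + 1) (M * (k + 1)) := by
      ext x
      simp only [mem_union, mem_Icc, mul_add]
      omega
    rw [this, Finset.sum_union]
    · congr 1
      rw [Finset.sum_congr rfl (g := fun _ => u (k + 1))]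
      · simp [mul_add]
      · intro x hx
        rw [mem_Icc] at hx
        exact repT_val u M (k + 1) x (by omega) (by simp; omega) hx.2
    · rw [Finset.disjoint_left]
      intro x hx hx'
      rw [mem_Icc] at hx hx'
      omega

lemma bal_cnt (b e a : ℕ → ℤ) (m n : ℕ) (σ τ : ℕ → ℕ) (Γ : ℕ → ℕ → ℕ)
    (h : IsBalDatum b e a m n σ τ Γ) (v : ℤ) :
    cnt e (m + n) v = cnt (fun j => e (σ j)) n v + cnt (fun i => e (τ i)) m v := by
  obtain ⟨h1, h2, h3, h4, h5, h6, -⟩ := h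
  have : ({k ∈ Icc 1 (m + n) | e k ≤ v} : Finset ℕ) =
      ({j ∈ Icc 1 n | e (σ j) ≤ v} : Finset ℕ).image σ ∪
      ({i ∈ Icc 1 m | e (τ i) ≤ v} : Finset ℕ).image τ := by
    ext x
    simp only [mem_union, mem_image, mem_filter]
    constructor
    · rintro ⟨hx, hv⟩
      rcases h6 x hx with ⟨j, hj, rfl⟩ | ⟨j, hj, rfl⟩
      · exact Or.inl ⟨j, ⟨hj, hv⟩, rfl⟩
      · exact Or.inr ⟨j, ⟨hj, hv⟩, rfl⟩
    · rintro (⟨j, ⟨hj, hv⟩, rfl⟩ | ⟨j, ⟨hj, hv⟩, rfl⟩)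
      · exact ⟨h1 j hj, hv⟩
      · exact ⟨h2 j hj, hv⟩
  rw [cnt, this, Finset.card_union_of_disjoint, Finset.card_image_of_injOn,
    Finset.card_image_of_injOn]
  · rfl
  · exact h4.mono (by intro x hx; simp at hx ⊢; exact hx.1)
  · exact h3.mono (by intro x hx; simp at hx ⊢; exact hx.1)
  · rw [Finset.disjoint_left]
    intro x hx hx'
    rw [mem_image] at hx hx'
    obtain ⟨j, hj, rfl⟩ := hx
    obtain ⟨i, hi, hh⟩ := hx'
    exact h5 i (mem_filter.1 hi).1 j (mem_filter.1 hj).1 hh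

lemma bal_le (b e a : ℕ → ℤ) (m n : ℕ) (σ τ : ℕ → ℕ) (Γ : ℕ → ℕ → ℕ)
    (h : IsBalDatum b e a m n σ τ Γ) :
    (∀ i ∈ Icc 1 m, b i ≤ e (τ i)) ∧ (∀ j ∈ Icc 1 n, e (σ j) ≤ a j) := by
  obtain ⟨-, -, -, -, -, -, -, h8, h9⟩ := h
  constructor
  · intro i hi
    have := h8 i hi
    have h0 : 0 ≤ ∑ j ∈ Icc 1 n, (Γ i j : ℤ) := Finset.sum_nonneg fun _ _ => by positivity
    omega
  · intro j hj
    have := h9 j hj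
    have h0 : 0 ≤ ∑ i ∈ Icc 1 m, (Γ i j : ℤ) := Finset.sum_nonneg fun _ _ => by positivity
    omega

/-- Nonnegativity of the defect along the path of a datum. -/
lemma bal_defect (b e a : ℕ → ℤ) (m n : ℕ) (hb : Incr b m) (ha : Incr a n)
    (σ τ : ℕ → ℕ) (Γ : ℕ → ℕ → ℕ)
    (h : IsBalDatum b e a m n σ τ Γ) (v : ℤ) (t : ℕ)
    (ht : t ≤ cnt (fun j => e (σ j)) n v) (ht' : cnt (fun j => e (σ j)) n (v - 1) < t) :
    ∑ j ∈ Icc 1 t, a j + ∑ i ∈ Icc 1 (cnt (fun i => e (τ i)) m v), b i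
      ≤ ∑ k ∈ Icc 1 (t + cnt (fun i => e (τ i)) m v), e k := by
  obtain ⟨h1, h2, h3, h4, h5, h6, h7, h8, h9⟩ := h
  obtain ⟨J, hJ1, hJ2, hJc⟩ := Finset.exists_subsuperset_card_eq
    (s := {j ∈ Icc 1 n | e (σ j) ≤ v - 1}) (t := {j ∈ Icc 1 n | e (σ j) ≤ v}) (n := t)
    (by intro x hx; rw [mem_filter] at hx ⊢; exact ⟨hx.1, by omega⟩) ht'.le ht
  set I : Finset ℕ := {i ∈ Icc 1 m | e (τ i) ≤ v} with hI
  have hIc : cnt (fun i => e (τ i)) m v = #I := rfl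
  rw [hIc]
  have hJn : J ⊆ Icc 1 n := hJ2.trans (Finset.filter_subset _ _)
  have hIm : I ⊆ Icc 1 m := Finset.filter_subset _ _
  have sa := init_sum a n t ha J hJn hJc
  have sb := init_sum b m (#I) hb I hIm rfl
  have hdis : Disjoint (J.image σ) (I.image τ) := by
    rw [Finset.disjoint_left]
    intro x hx hx'
    rw [mem_image] at hx hx'
    obtain ⟨j, hj, rfl⟩ := hx
    obtain ⟨i, hi, hh⟩ := hx'
    exact h5 i (hIm hi) j (hJn hj) hh
  have iσ : Set.InjOn σ ↑J := h3.mono (by exact_mod_cast hJn)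
  have iτ : Set.InjOn τ ↑I := h4.mono (by exact_mod_cast hIm)
  have hKc : #(J.image σ ∪ I.image τ) = t + #I := by
    rw [Finset.card_union_of_disjoint hdis, Finset.card_image_of_injOn iσ,
      Finset.card_image_of_injOn iτ, hJc]
  have hKs : J.image σ ∪ I.image τ ⊆ Icc 1 (m + n) := by
    intro x hx
    rw [mem_union, mem_image, mem_image] at hx
    rcases hx with ⟨j, hj, rfl⟩ | ⟨j, hj, rfl⟩
    · exact h1 j (hJn hj)
    · exact h2 j (hIm hj)
  have se : ∑ k ∈ J.image σ ∪ I.image τ, e k ≤ ∑ k ∈ Icc 1 (t + #I), e k := by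
    apply low_sum e (Icc 1 (m + n)) _ _ v hKs
    · apply Finset.Icc_subset_Icc le_rfl
      rw [← hKc]
      have := Finset.card_le_card hKs
      simpa using this
    · intro k hk
      rw [mem_union, mem_image, mem_image] at hk
      rcases hk with ⟨j, hj, rfl⟩ | ⟨j, hj, rfl⟩
      · exact (mem_filter.1 (hJ2 hj)).2
      · exact (mem_filter.1 hj).2
    · intro k hk hk'
      rw [mem_union, not_or, mem_image, mem_image] at hk'
      by_contra hcon
      rcases h6 k hk with ⟨j, hj, rfl⟩ | ⟨j, hj, rfl⟩
      · exact hk'.1 ⟨j, hJ1 (by rw [mem_filter]; exact ⟨hj, by omega⟩), rfl⟩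
      · exact hk'.2 ⟨j, by rw [hI, mem_filter]; exact ⟨hj, by omega⟩, rfl⟩
    · rw [hKc]; simp
  rw [Finset.sum_union hdis, Finset.sum_image iσ, Finset.sum_image iτ] at se
  have f1 : ∑ j ∈ J, (a j - e (σ j)) = ∑ j ∈ J, ∑ i ∈ I, (Γ i j : ℤ) := by
    apply Finset.sum_congr rfl
    intro j hj
    rw [← h9 j (hJn hj)]
    symm
    apply Finset.sum_subset hIm
    intro i hi hi'
    by_contra hne
    have h7' := (h7 i hi j (hJn hj) (by exact_mod_cast hne)).2.1
    have := (mem_filter.1 (hJ2 hj)).2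
    exact hi' (by rw [hI, mem_filter]; exact ⟨hi, h7'.trans this⟩)
  have f2 : ∑ j ∈ J, ∑ i ∈ I, (Γ i j : ℤ) ≤ ∑ i ∈ I, (e (τ i) - b i) := by
    rw [Finset.sum_comm]
    apply Finset.sum_le_sum
    intro i hi
    rw [← h8 i (hIm hi)]
    exact Finset.sum_le_sum_of_subset_of_nonneg hJn fun _ _ _ => by positivity
  rw [← f1] at f2
  simp only [Finset.sum_sub_distrib] at f2
  linarith

lemma step_sum (b e : ℕ → ℤ) (t y z : ℕ) (hyz : y ≤ z)
    (h : ∀ s, y < s → s ≤ z → b s ≤ e (t + s)) (c : ℤ)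
    (h0 : c + ∑ i ∈ Icc 1 y, b i ≤ ∑ k ∈ Icc 1 (t + y), e k) :
    c + ∑ i ∈ Icc 1 z, b i ≤ ∑ k ∈ Icc 1 (t + z), e k := by
  induction z, hyz using Nat.le_induction with
  | base => exact h0
  | succ z hz ih =>
    have := ih (fun s h1 h2 => h s h1 (by omega))
    rw [Finset.sum_Icc_succ_top (by omega), ← add_assoc t z 1, Finset.sum_Icc_succ_top (by omega)]
    have := h (z + 1) (by omega) le_rfl
    rw [← add_assoc] at this
    linarith

/-- Theorem: if the `M`-fold repetition of a triple admits a balancing datum,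
then so does the triple itself (integrality of the codimension-2
Boij–Söderberg cone). -/
theorem stmt4 (m n M : ℕ) (hm : 1 ≤ m) (hn : 1 ≤ n) (hM : 1 ≤ M)
    (b e a : ℕ → ℤ) (hb : Incr b m) (he : Incr e (m + n)) (ha : Incr a n)
    (hdeg : degT a n + degT b m = degT e (m + n))
    (h : HasBalDatum (repT b M) (repT e M) (repT a M) (M * m) (M * n)) :
    HasBalDatum b e a m n := by
  obtain ⟨σ, τ, Γ, h⟩ := h
  have hB := repT_incr b M m hM hb
  have hE := repT_incr e M (m + n) hM he
  have hA := repT_incr a M n hM ha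
  rw [mul_add] at hE
  have hcE := bal_cnt _ _ _ _ _ _ _ _ h
  obtain ⟨hle1, hle2⟩ := bal_le _ _ _ _ _ _ _ _ h
  have hdef := bal_defect _ _ _ _ _ hB hA _ _ _ h
  have cB := fun v => cnt_le_cnt _ _ _ v hle1
  have cA := fun v => cnt_le_cnt _ _ _ v hle2
  set cσ := cnt (fun j => repT e M (σ j)) (M * n) with hcσ
  set cτ := cnt (fun i => repT e M (τ i)) (M * m) with hcτ
  have hσmono : ∀ v w, v ≤ w → cσ v ≤ cσ w := fun v w hvw => cnt_mono _ _ hvw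
  have hτmono : ∀ v w, v ≤ w → cτ v ≤ cτ w := fun v w hvw => cnt_mono _ _ hvw
  have hσle : ∀ v, cσ v ≤ M * n := fun v => cnt_le _ _ _
  have hτle : ∀ v, cτ v ≤ M * m := fun v => cnt_le _ _ _
  have hsel : ∀ q, ∃ v : ℤ, q ∈ Icc 1 n → M * q ≤ cσ v ∧ cσ (v - 1) < M * q := by
    intro q
    by_cases hq : q ∈ Icc 1 n
    · rw [mem_Icc] at hq
      obtain ⟨v, hv⟩ := cnt_sel (fun j => repT e M (σ j)) (M * n) (M * q) (by nlinarith)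
        (Nat.mul_le_mul_left _ hq.2)
      exact ⟨v, fun _ => hv⟩
    · exact ⟨0, fun h => absurd h hq⟩
  choose v hv using hsel
  have hvmono : ∀ q q', 1 ≤ q → q ≤ q' → q' ≤ n → v q ≤ v q' := by
    intro q q' h1 h2 h3
    by_contra hcon
    have k1 := (hv q (by rw [mem_Icc]; omega)).2
    have k2 := (hv q' (by rw [mem_Icc]; omega)).1
    have k3 := hσmono (v q') (v q - 1) (by omega)
    have := Nat.mul_le_mul_left M h2
    omega

  have key : ∀ p ∈ Icc 1 m, ∀ (u : ℤ) (r : ℕ), 1 ≤ r → r ≤ m + n →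
      (∀ w, M * (p - 1) < cτ w → cτ (w - 1) ≤ M * (p - 1) →
        cσ (w - 1) + M * (p - 1) < M * r) → b p ≤ e r := by
    intro p hp _ r hr1 hr2 hyp
    rw [mem_Icc] at hp
    have hpm := Nat.mul_le_mul_left M hp.2
    have hpp : M * p = M * (p - 1) + M := by
      rw [← Nat.mul_succ]; congr 1; omega
    obtain ⟨w, hw1, hw2⟩ := cnt_sel (fun i => repT e M (τ i)) (M * m) (M * (p - 1) + 1)
      (by omega) (by omega)
    rw [← hcτ] at hw1 hw2
    have hyp' := hyp w (by omega) (by omega)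
    have e1 : repT b M (M * (p - 1) + 1) = b p := repT_val b M p _ hp.1 (by omega) (by omega)
    have hrm := Nat.mul_le_mul_left M hr2
    rw [mul_add] at hrm
    have hrr : M * r = M * (r - 1) + M := by
      rw [← Nat.mul_succ]; congr 1; omega
    have e2 : repT e M (M * r) = e r := repT_val e M r _ hr1 (by omega) le_rfl
    rw [← e1, ← e2]
    have l1 := (cnt_sorted _ _ hB w (M * (p - 1) + 1) (by omega) (by omega)).2
      (hw1.trans (cB w))
    have l2 : ¬ repT e M (M * r) ≤ w - 1 := by
      rw [cnt_sorted _ _ hE (w - 1) (M * r) (by omega) hrm, hcE]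
      omega
    omega
  set R : ℕ → ℕ := fun q => (cτ (v q) + (M - 1)) / M with hRdef
  have hR1 : ∀ q, cτ (v q) ≤ M * R q := by
    intro q
    have := Nat.div_add_mod (cτ (v q) + (M - 1)) M
    have := Nat.mod_lt (cτ (v q) + (M - 1)) (show 0 < M by omega)
    simp only [hRdef]; omega
  have hR2 : ∀ q p, 1 ≤ p → p ≤ R q → M * (p - 1) < cτ (v q) := by
    intro q p hp1 hp
    have := Nat.mul_div_le (cτ (v q) + (M - 1)) M
    have h2 := Nat.mul_le_mul_left M hp
    have hpp : M * p = M * (p - 1) + M := by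
      rw [← Nat.mul_succ]; congr 1; omega
    simp only [hRdef] at h2
    omega
  have hRm : ∀ q, R q ≤ m := by
    intro q
    by_contra hcon
    have := hR2 q (m + 1) (by omega) (by omega)
    have := hτle (v q)
    simp at *
    omega
  have hBB : ∀ q ∈ Icc 1 n, ∀ p, 1 ≤ p → p ≤ R q → b p ≤ e (p + q - 1) := by
    intro q hq p hp1 hp2
    have hq' := mem_Icc.1 hq
    have hpm := hRm q
    apply key p (by rw [mem_Icc]; omega) 0 _ (by omega) (by omega)
    intro w hw1 hw2
    have k1 := hR2 q p hp1 hp2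
    have hwv : w ≤ v q := by
      by_contra hcon
      have := hτmono (v q) (w - 1) (by omega)
      omega
    have k2 := hσmono (w - 1) (v q - 1) (by omega)
    have k3 := (hv q hq).2
    have : M * (p + q - 1) = M * (p - 1) + M * q := by
      rw [← mul_add]; congr 1; omega
    omega
  apply path_datum m n b e a he hdeg R (fun q _ => hRm q)
  · intro q q' h1 h2 h3
    have := hτmono _ _ (hvmono q q' h1 h2 h3)
    exact Nat.div_le_div_right (by omega)
  · intro q hq
    have hq' := mem_Icc.1 hq
    obtain ⟨v1, v2⟩ := hv q hq
    have hMq := Nat.mul_le_mul_left M hq'.2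
    have hMq1 : M * q = M * (q - 1) + M := by
      rw [← Nat.mul_succ]; congr 1; omega
    have e1 : repT a M (M * q) = a q := repT_val a M q _ hq'.1 (by omega) le_rfl
    have hexp : M * (q + R q) = M * q + M * R q := mul_add _ _ _
    have r1 := hR1 q
    have e2 : repT e M (M * q + cτ (v q)) = e (q + R q) := by
      apply repT_val e M _ _ (by omega) _ (by omega)
      rcases Nat.eq_zero_or_pos (R q) with h0 | h0
      · rw [h0, Nat.add_zero]; omega
      · have := hR2 q (R q) h0 le_rfl
        have : M * (q + R q - 1) = M * q + M * (R q - 1) := by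
          rw [← mul_add]; congr 1; omega
        omega
    rw [← e1, ← e2]
    have l1 : ¬ repT a M (M * q) ≤ v q - 1 := by
      rw [cnt_sorted _ _ hA (v q - 1) (M * q) (by omega) hMq]
      have := cA (v q - 1)
      change _ ≤ cσ _ at this
      omega
    have := hτle (v q)
    have l2 := (cnt_sorted _ _ hE (v q) (M * q + cτ (v q)) (by omega) (by omega)).2
      (by rw [hcE]; omega)
    omega
  · exact hBB
  · intro p hp
    have hp' := mem_Icc.1 hp
    apply key p hp 0 _ (by omega) (by omega)
    intro w _ _
    have := hσle (w - 1)
    have : M * (p + n) = M * (p - 1) + M + M * n := by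
      rw [← Nat.mul_succ, ← mul_add]; congr 1; omega
    omega
  · intro q hq
    have hq' := mem_Icc.1 hq
    obtain ⟨v1, v2⟩ := hv q hq
    have d0 := hdef (v q) (M * q) v1 v2
    have d1 := step_sum (repT b M) (repT e M) (M * q) (cτ (v q)) (M * R q) (hR1 q) (by
      intro s hs1 hs2
      have hR0 : 1 ≤ R q := by
        by_contra hcon
        have : R q = 0 := by omega
        rw [this] at hs2
        omega
      have k1 := hR2 q (R q) hR0 le_rfl
      rw [repT_val b M (R q) s hR0 (by omega) hs2,
        repT_val e M (q + R q) (M * q + s) (by omega) (by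
          have : M * (q + R q - 1) = M * q + M * (R q - 1) := by
            rw [← mul_add]; congr 1; omega
          omega) (by rw [mul_add]; omega)]
      have k2 := hBB q hq (R q) hR0 le_rfl
      have k3 := hRm q
      exact k2.trans (he _ _ (by omega) (by omega) (by omega))) _ d0
    rw [← mul_add, repT_sum, repT_sum, repT_sum, ← mul_add] at d1
    exact le_of_mul_le_mul_left d1 (by exact_mod_cast hM)
end
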